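/- arXiv:0910.5430 — 3 statements merged into one kernel-verified Lean document; each statement's English description precedes it below -/
import Mathlib

section
/- Let x₀ ∈ ℝ^m, N ∈ ℕ, and let c_1, …, c_m ∈ λ_N be pairwise commuting elements of the Grassmann algebra with ε(c_i) = (x₀)_i for all i. Then there exists exactly one ℝ-algebra homomorphism a : C^∞_{x₀} → λ_N from the ring of germs at x₀ of smooth real-valued functions to λ_N such that a sends the germ of the i-th coordinate function y ↦ y_i to c_i for every i = 1, …, m. -/
open Filter Topology

/-- The canonical `ℝ`-algebra structure on the ring of germs of `A`-valued functions,
where `A` is an `ℝ`-algebra. -/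
noncomputable instance Filter.Germ.instAlgebraReal {α : Type*} (l : Filter α) (A : Type*)
    [Semiring A] [Algebra ℝ A] : Algebra ℝ (Filter.Germ l A) :=
  Algebra.ofModule
    (fun r x y => x.inductionOn fun f => y.inductionOn fun g => by
      rw [← Filter.Germ.coe_smul, ← Filter.Germ.coe_mul, ← Filter.Germ.coe_mul,
        ← Filter.Germ.coe_smul]
      exact congrArg _ (funext fun z => smul_mul_assoc r (f z) (g z)))
    (fun r x y => x.inductionOn fun f => y.inductionOn fun g => by
      rw [← Filter.Germ.coe_smul, ← Filter.Germ.coe_mul, ← Filter.Germ.coe_mul,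
        ← Filter.Germ.coe_smul]
      exact congrArg _ (funext fun z => mul_smul_comm r (f z) (g z)))

/-- `C^∞_x`: the `ℝ`-algebra of germs at `x` of smooth (`C^∞`) real-valued functions
defined on open neighbourhoods of `x` in `ℝ^n`. -/
noncomputable def SmoothGermAt (n : ℕ) (x : Fin n → ℝ) :
    Subalgebra ℝ (Filter.Germ (𝓝 x) ℝ) where
  carrier := {φ | ∃ f : (Fin n → ℝ) → ℝ,
    (∃ U : Set (Fin n → ℝ), IsOpen U ∧ x ∈ U ∧ ContDiffOn ℝ (⊤ : ℕ∞) f U) ∧ φ = ↑f}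
  mul_mem' := by
    rintro φ ψ ⟨f, ⟨U, hU, hxU, hf⟩, rfl⟩ ⟨g, ⟨V, hV, hxV, hg⟩, rfl⟩
    exact ⟨f * g, ⟨U ∩ V, hU.inter hV, ⟨hxU, hxV⟩,
      (hf.mono Set.inter_subset_left).mul (hg.mono Set.inter_subset_right)⟩,
      (Filter.Germ.coe_mul f g).symm ▸ rfl⟩
  add_mem' := by
    rintro φ ψ ⟨f, ⟨U, hU, hxU, hf⟩, rfl⟩ ⟨g, ⟨V, hV, hxV, hg⟩, rfl⟩
    exact ⟨f + g, ⟨U ∩ V, hU.inter hV, ⟨hxU, hxV⟩,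
      (hf.mono Set.inter_subset_left).add (hg.mono Set.inter_subset_right)⟩,
      (Filter.Germ.coe_add f g).symm ▸ rfl⟩
  algebraMap_mem' := by
    intro c
    refine ⟨fun _ => c, ⟨Set.univ, isOpen_univ, trivial, contDiffOn_const⟩, ?_⟩
    show c • (1 : Filter.Germ (𝓝 x) ℝ) = _
    rw [show (1 : Filter.Germ (𝓝 x) ℝ) = ((fun _ => (1:ℝ)) : (Fin n → ℝ) → ℝ) from rfl,
      ← Filter.Germ.coe_smul]
    exact congrArg _ (funext fun z => by simp [smul_eq_mul])

/-- Evaluation of a smooth germ at its base point, as a ring homomorphism. -/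
noncomputable def SmoothGermAt.evalHom (n : ℕ) (x : Fin n → ℝ) :
    SmoothGermAt n x →+* ℝ :=
  (Filter.Germ.valueRingHom).comp (Subalgebra.val _).toRingHom

/-- The maximal ideal `m_x` of germs vanishing at `x`. -/
noncomputable def SmoothGermAt.mIdeal (n : ℕ) (x : Fin n → ℝ) :
    Ideal (SmoothGermAt n x) :=
  RingHom.ker (SmoothGermAt.evalHom n x)

/-- The germ at `x₀` of the `i`-th coordinate function `y ↦ y i`, as an element of `C^∞_{x₀}`. -/
noncomputable def coordFunGermAt (m : ℕ) (x₀ : Fin m → ℝ) (i : Fin m) : SmoothGermAt m x₀ :=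
  ⟨(↑(fun y : Fin m → ℝ => y i) : Filter.Germ (𝓝 x₀) ℝ),
    ⟨fun y => y i, ⟨Set.univ, isOpen_univ, trivial,
      (ContinuousLinearMap.proj (R := ℝ) (φ := fun _ : Fin m => ℝ) i).contDiff.contDiffOn⟩,
      rfl⟩⟩

theorem GA_contDiff_param {E : Type} [NormedAddCommGroup E] [NormedSpace ℝ E] [FiniteDimensional ℝ E]
    (n : ℕ) : ∀ {F : Type} [NormedAddCommGroup F] [NormedSpace ℝ F] [CompleteSpace F]
    (g : E → ℝ → F), ContDiff ℝ n (Function.uncurry g) →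
    ContDiff ℝ n (fun x => ∫ t in (0:ℝ)..1, g x t) := by
  induction n with
  | zero =>
    intro F _ _ _ g hg
    simp only [Nat.cast_zero, contDiff_zero] at hg ⊢
    exact intervalIntegral.continuous_parametric_intervalIntegral_of_continuous' hg 0 1
  | succ n ih =>
    intro F _ _ _ g hg
    have hd : Differentiable ℝ (Function.uncurry g) := hg.differentiable (by simp)
    let g' : E → ℝ → (E →L[ℝ] F) := fun x t =>
      (fderiv ℝ (Function.uncurry g) (x, t)).comp (ContinuousLinearMap.inl ℝ E ℝ)
    have hg' : ContDiff ℝ n (Function.uncurry g') := by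
      have h1 : ContDiff ℝ n (fderiv ℝ (Function.uncurry g)) :=
        hg.fderiv_right (by norm_cast)
      exact h1.clm_comp contDiff_const
    have hder : ∀ x t, HasFDerivAt (fun x => g x t) (g' x t) x := by
      intro x t
      have h2 : HasFDerivAt (fun x : E => (x, t)) (ContinuousLinearMap.inl ℝ E ℝ) x :=
        hasFDerivAt_prodMk_left x t
      exact (hd (x, t)).hasFDerivAt.comp x h2
    push_cast
    refine contDiff_succ_iff_hasFDerivAt.2 ⟨fun x => ∫ t in (0:ℝ)..1, g' x t, ih g' hg', ?_⟩
    intro x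
    have hc' : Continuous (Function.uncurry g') := hg'.continuous
    have hc : Continuous (Function.uncurry g) := hg.continuous
    obtain ⟨C, hC⟩ := ((isCompact_closedBall x 1).prod (isCompact_Icc (a := (0:ℝ)) (b := 1))).exists_bound_of_continuousOn
      hc'.continuousOn
    refine intervalIntegral.hasFDerivAt_integral_of_dominated_of_fderiv_le
      (s := Metric.closedBall x 1) (bound := fun _ => C) (Metric.closedBall_mem_nhds x one_pos) ?_ ?_ ?_ ?_ ?_ ?_
    · exact Filter.Eventually.of_forall fun y =>
        (hc.comp (Continuous.prodMk_right y)).aestronglyMeasurable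
    · exact (hc.comp (Continuous.prodMk_right x)).intervalIntegrable _ _
    · exact (hc'.comp (Continuous.prodMk_right x)).aestronglyMeasurable
    · refine Filter.Eventually.of_forall fun t ht y hy => hC (y, t) ⟨hy, ?_⟩
      rw [Set.uIoc_of_le zero_le_one] at ht
      exact ⟨ht.1.le, ht.2⟩
    · exact intervalIntegrable_const
    · exact Filter.Eventually.of_forall fun t _ y _ => hder y t

theorem GA_hadamard_global {m : ℕ} (f : (Fin m → ℝ) → ℝ) (hf : ContDiff ℝ (⊤ : ℕ∞) f)
    (x : Fin m → ℝ) : ∃ g : Fin m → (Fin m → ℝ) → ℝ, (∀ i, ContDiff ℝ (⊤ : ℕ∞) (g i)) ∧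
      ∀ y, f y = f x + ∑ i, (y i - x i) * g i y := by
  have hd : Differentiable ℝ f := hf.differentiable (by simp)
  have hk : ContDiff ℝ (⊤ : ℕ∞) (fderiv ℝ f) := hf.fderiv_right (by simp)
  have hsm : ∀ i, ContDiff ℝ (⊤ : ℕ∞) (Function.uncurry fun (y : Fin m → ℝ) (t : ℝ) =>
      fderiv ℝ f (x + t • (y - x)) (Pi.single i 1)) := by
    intro i
    have : ContDiff ℝ (⊤ : ℕ∞) (fun p : (Fin m → ℝ) × ℝ => x + p.2 • (p.1 - x)) := by fun_prop
    exact (hk.comp this).clm_apply contDiff_const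
  refine ⟨fun i y => ∫ t in (0:ℝ)..1, fderiv ℝ f (x + t • (y - x)) (Pi.single i 1), ?_, ?_⟩
  · intro i
    refine contDiff_infty.2 fun n => GA_contDiff_param n _ ?_
    exact contDiff_infty.1 (hsm i) n
  · intro y
    have h1 : ∫ t in (0:ℝ)..1, fderiv ℝ f (x + t • (y - x)) (y - x) = f y - f x := by
      have := intervalIntegral.integral_eq_sub_of_hasDerivAt (a := 0) (b := 1)
        (f := fun t : ℝ => f (x + t • (y - x)))
        (f' := fun t : ℝ => fderiv ℝ f (x + t • (y - x)) (y - x)) ?_ ?_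
      · simpa using this
      · intro t _
        have h2 : HasDerivAt (fun t : ℝ => x + t • (y - x)) (y - x) t := by
          simpa using ((hasDerivAt_id t).smul_const (y - x)).const_add x
        exact (hd _).hasFDerivAt.comp_hasDerivAt t h2
      · apply Continuous.intervalIntegrable
        have : Continuous fun t : ℝ => x + t • (y - x) := by fun_prop
        exact (hk.continuous.comp this).clm_apply continuous_const
    have h3 : ∀ t : ℝ, fderiv ℝ f (x + t • (y - x)) (y - x) =
        ∑ i, (y i - x i) * fderiv ℝ f (x + t • (y - x)) (Pi.single i 1) := by
      intro t
      generalize fderiv ℝ f (x + t • (y - x)) = L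
      conv_lhs => rw [pi_eq_sum_univ' (y - x)]
      simp only [map_sum, map_smul, smul_eq_mul, Pi.sub_apply]
    simp only [h3] at h1
    rw [intervalIntegral.integral_finsetSum] at h1
    · simp only [intervalIntegral.integral_const_mul] at h1
      linarith
    · intro i _
      apply Continuous.intervalIntegrable
      exact continuous_const.mul ((hsm i).continuous.comp (Continuous.prodMk_right y))

theorem GA_extend {m : ℕ} (f : (Fin m → ℝ) → ℝ) (x : Fin m → ℝ) (U : Set (Fin m → ℝ))
    (hU : IsOpen U) (hx : x ∈ U) (hf : ContDiffOn ℝ (⊤ : ℕ∞) f U) :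
    ∃ g : (Fin m → ℝ) → ℝ, ContDiff ℝ (⊤ : ℕ∞) g ∧ g =ᶠ[𝓝 x] f := by
  obtain ⟨r, hr, hrU⟩ := Metric.isOpen_iff.1 hU x hx
  let b : ContDiffBump x := ⟨r / 4, r / 2, by positivity, by linarith⟩
  refine ⟨fun y => b y * f y, ?_, ?_⟩
  · rw [contDiff_iff_contDiffAt]
    intro y
    by_cases hy : y ∈ U
    · exact b.contDiff.contDiffAt.mul (hf.contDiffAt (hU.mem_nhds hy))
    · have : (fun y => b y * f y) =ᶠ[𝓝 y] fun _ => 0 := by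
        have h1 : y ∈ (tsupport b)ᶜ := by
          rw [b.tsupport_eq]
          intro h
          apply hy
          apply hrU
          exact Metric.closedBall_subset_ball (by change r / 2 < r; linarith) h
        filter_upwards [(isClosed_tsupport b).isOpen_compl.mem_nhds h1] with z hz
        rw [image_eq_zero_of_notMem_tsupport hz, zero_mul]
      exact contDiffAt_const.congr_of_eventuallyEq this
  · filter_upwards [b.eventuallyEq_one] with z hz
    rw [hz]; simp

theorem GA_range_pow (N : ℕ) :
    (LinearMap.range (ExteriorAlgebra.ι ℝ (M := Fin N → ℝ))) ^ (N + 1) = ⊥ := by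
  have h : Module.finrank ℝ (⋀[ℝ]^(N+1) (Fin N → ℝ)) = 0 := by
    rw [exteriorPower.finrank_eq]; simp
  exact Submodule.finrank_eq_zero.1 h

theorem GA_nilp (N : ℕ) (z : ExteriorAlgebra ℝ (Fin N → ℝ))
    (hz : ExteriorAlgebra.algebraMapInv z = 0) : IsNilpotent z := by
  let M := LinearMap.range (ExteriorAlgebra.ι ℝ (M := Fin N → ℝ))
  have hMT : ∀ w : ExteriorAlgebra ℝ (Fin N → ℝ), ∀ y ∈ M, w * y ∈ M * ⊤ := by
    intro w
    induction w using ExteriorAlgebra.induction with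
    | algebraMap r =>
      intro y hy
      rw [Algebra.commutes]
      exact Submodule.mul_mem_mul hy trivial
    | ι v =>
      intro y hy
      exact Submodule.mul_mem_mul ⟨v, rfl⟩ trivial
    | mul a b ha hb =>
      intro y hy
      rw [mul_assoc]
      have key : ∀ u ∈ M * ⊤, a * u ∈ M * (⊤ : Submodule ℝ (ExteriorAlgebra ℝ (Fin N → ℝ))) := by
        intro u hu
        induction hu using Submodule.mul_induction_on' with
        | mem_mul_mem p hp q hq =>
          have := Submodule.mul_mem_mul (ha p hp) (show q ∈ ⊤ from trivial)
          rw [mul_assoc M, mul_assoc a] at this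
          exact (mul_le_mul' le_rfl le_top : M * (⊤ * ⊤) ≤ M * ⊤) this
        | add p _ q _ hp hq => rw [mul_add]; exact add_mem hp hq
      exact key _ (hb y hy)
    | add a b ha hb =>
      intro y hy
      rw [add_mul]; exact add_mem (ha y hy) (hb y hy)
  have hTM : (⊤ : Submodule ℝ (ExteriorAlgebra ℝ (Fin N → ℝ))) * M ≤ M * ⊤ :=
    Submodule.mul_le.2 fun w _ y hy => hMT w y hy
  have hpow : ∀ k, (M * ⊤) ^ k ≤ M ^ k * ⊤ := by
    intro k
    induction k with
    | zero => simp
    | succ k ih =>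
      calc (M * ⊤) ^ (k+1) = (M * ⊤) ^ k * (M * ⊤) := pow_succ _ _
        _ ≤ (M ^ k * ⊤) * (M * ⊤) := mul_le_mul' ih le_rfl
        _ = M ^ k * (⊤ * M * ⊤) := by simp only [mul_assoc]
        _ ≤ M ^ k * ((M * ⊤) * ⊤) := mul_le_mul' le_rfl (mul_le_mul' hTM le_rfl)
        _ = M ^ (k+1) * (⊤ * ⊤) := by rw [pow_succ]; simp only [mul_assoc]
        _ ≤ _ := mul_le_mul' le_rfl le_top
  have hmem : ∀ w : ExteriorAlgebra ℝ (Fin N → ℝ),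
      w - algebraMap ℝ _ (ExteriorAlgebra.algebraMapInv w) ∈ M * (⊤ : Submodule ℝ _) := by
    intro w
    induction w using ExteriorAlgebra.induction with
    | algebraMap r => simp
    | ι v =>
      have h0 : ExteriorAlgebra.algebraMapInv (ExteriorAlgebra.ι ℝ v) = 0 := by
        simp [ExteriorAlgebra.algebraMapInv]
      rw [h0, map_zero, sub_zero]
      simpa using Submodule.mul_mem_mul (show ExteriorAlgebra.ι ℝ v ∈ M from ⟨v, rfl⟩)
        (show (1 : ExteriorAlgebra ℝ (Fin N → ℝ)) ∈ (⊤ : Submodule ℝ _) from trivial)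
    | mul a b ha hb =>
      have e : a * b - algebraMap ℝ _ (ExteriorAlgebra.algebraMapInv (a * b)) =
        (a - algebraMap ℝ _ (ExteriorAlgebra.algebraMapInv a)) * b +
        ExteriorAlgebra.algebraMapInv a • (b - algebraMap ℝ _ (ExteriorAlgebra.algebraMapInv b)) := by
        rw [map_mul, map_mul, Algebra.smul_def]; noncomm_ring
      rw [e]
      refine add_mem ?_ (Submodule.smul_mem _ _ hb)
      have := Submodule.mul_mem_mul ha (show b ∈ ⊤ from trivial)
      rw [mul_assoc] at this
      exact (mul_le_mul' le_rfl le_top : M * (⊤ * ⊤) ≤ M * ⊤) this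
    | add a b ha hb =>
      rw [map_add, map_add, add_sub_add_comm]; exact add_mem ha hb
  have h1 := hmem z
  rw [hz, map_zero, sub_zero] at h1
  refine ⟨N + 1, ?_⟩
  have h2 := hpow (N+1) (Submodule.pow_mem_pow _ h1 (N+1))
  rw [GA_range_pow] at h2
  simpa using h2

theorem GA_poly1 (q : Polynomial ℝ) (K : ℕ)
    (h : (fun t : ℝ => q.eval t) =O[𝓝 0] fun t : ℝ => t ^ K) (d : ℕ) (hd : d < K) :
    q.coeff d = 0 := by
  induction d using Nat.strong_induction_on with
  | _ d ih =>
  have hdvd : Polynomial.X ^ d ∣ q := by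
    rw [Polynomial.X_pow_dvd_iff]
    exact fun e he => ih e he (he.trans hd)
  obtain ⟨s, rfl⟩ := hdvd
  have : (Polynomial.X ^ d * s).coeff d = s.eval 0 := by
    rw [← Polynomial.coeff_zero_eq_eval_zero]
    simpa using Polynomial.coeff_X_pow_mul s d 0
  rw [this]
  have h1 : (fun t : ℝ => s.eval t) =O[𝓝[≠] 0] fun t : ℝ => t ^ (K - d) := by
    have h2 := h.mono (nhdsWithin_le_nhds (s := {0}ᶜ))
    have h3 := (Asymptotics.isBigO_refl (fun t : ℝ => (t ^ d)⁻¹) (𝓝[≠] 0)).mul h2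
    refine h3.congr' ?_ ?_
    · filter_upwards [self_mem_nhdsWithin] with t ht
      have : t ≠ 0 := ht
      simp; field_simp
    · filter_upwards [self_mem_nhdsWithin] with t ht
      have : t ≠ 0 := ht
      rw [← Nat.sub_add_cancel hd.le, pow_add]
      simp; field_simp
  have h4 : Tendsto (fun t : ℝ => t ^ (K - d)) (𝓝[≠] 0) (𝓝 0) := by
    have : Tendsto (fun t : ℝ => t ^ (K - d)) (𝓝 0) (𝓝 (0 ^ (K-d))) := (continuous_pow _).tendsto 0
    rw [zero_pow (by omega)] at this
    exact this.mono_left nhdsWithin_le_nhds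
  have h5 := h1.trans_tendsto h4
  have h6 : Tendsto (fun t : ℝ => s.eval t) (𝓝[≠] 0) (𝓝 (s.eval 0)) :=
    (s.continuous.tendsto 0).mono_left nhdsWithin_le_nhds
  exact tendsto_nhds_unique h6 h5

open MvPolynomial in
theorem GA_poly {m : ℕ} (p : MvPolynomial (Fin m) ℝ) (x : Fin m → ℝ) (K : ℕ)
    (h : (fun y => eval (y - x) p) =O[𝓝 x] fun y => ‖y - x‖ ^ K) :
    p ∈ idealOfVars (Fin m) ℝ ^ K := by
  rw [mem_pow_idealOfVars_iff']
  intro e he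
  suffices H : homogeneousComponent e.degree p = 0 by
    have := coeff_homogeneousComponent e.degree p e
    rw [if_pos rfl, H] at this
    simpa using this.symm
  apply MvPolynomial.funext
  intro v
  rw [map_zero]
  let q : Polynomial ℝ := ∑ d ∈ Finset.range (p.totalDegree + 1),
    Polynomial.monomial d (eval v (homogeneousComponent d p))
  have hq : ∀ t, q.eval t = eval (t • v) p := by
    intro t
    conv_rhs => rw [← sum_homogeneousComponent p]
    simp only [q, Polynomial.eval_finsetSum, map_sum, Polynomial.eval_monomial]
    refine Finset.sum_congr rfl fun d _ => ?_
    rw [eval_eq, eval_eq, Finset.sum_mul]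
    refine Finset.sum_congr rfl fun u hu => ?_
    have hud : u.degree = d := by
      by_contra hne
      rw [mem_support_iff, coeff_homogeneousComponent, if_neg hne] at hu
      exact hu rfl
    simp only [Pi.smul_apply, smul_eq_mul, mul_pow, Finset.prod_mul_distrib]
    rw [Finset.prod_pow_eq_pow_sum, ← Finsupp.degree_apply, hud]
    ring
  have hcoef : q.coeff e.degree = eval v (homogeneousComponent e.degree p) := by
    simp only [q, Polynomial.finsetSum_coeff, Polynomial.coeff_monomial]
    rw [Finset.sum_ite_eq']
    split_ifs with hh
    · rfl
    · rw [homogeneousComponent_eq_zero]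
      · simp
      · simpa [Nat.lt_succ_iff] using hh
  rw [← hcoef]
  refine GA_poly1 q K ?_ _ he
  have ht : Tendsto (fun t : ℝ => x + t • v) (𝓝 0) (𝓝 x) := by
    have : Continuous fun t : ℝ => x + t • v := by fun_prop
    simpa using this.tendsto 0
  have h1 := h.comp_tendsto ht
  simp only [Function.comp_def, add_sub_cancel_left, ← hq] at h1
  refine h1.trans ?_
  refine Asymptotics.IsBigO.of_bound (‖v‖ ^ K) (Filter.Eventually.of_forall fun t => ?_)
  simp [norm_smul, mul_pow, mul_comm]

section
open MvPolynomial

theorem GA_approx {m : ℕ} {A : Type*} [CommRing A] [Algebra ℝ A]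
    (φ : MvPolynomial (Fin m) ℝ →ₐ[ℝ] A)
    (h1 : ∀ f : A, ∃ (r : ℝ) (g : Fin m → A), f = algebraMap ℝ A r + ∑ i, φ (X i) * g i)
    (K : ℕ) : ∀ f : A, ∃ p, f - φ p ∈ ((idealOfVars (Fin m) ℝ).map φ) ^ K := by
  induction K with
  | zero => intro f; exact ⟨0, by simp⟩
  | succ K ih =>
    intro f
    obtain ⟨r, g, rfl⟩ := h1 f
    choose p hp using fun i => ih (g i)
    refine ⟨C r + ∑ i, X i * p i, ?_⟩
    have : algebraMap ℝ A r + ∑ i, φ (X i) * g i - φ (C r + ∑ i, X i * p i) =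
        ∑ i, φ (X i) * (g i - φ (p i)) := by
      have hr : φ (C r) = algebraMap ℝ A r := φ.commutes r
      simp only [map_add, map_sum, map_mul, hr, mul_sub, Finset.sum_sub_distrib]
      ring
    rw [this, pow_succ']
    refine sum_mem fun i _ => Ideal.mul_mem_mul ?_ (hp i)
    exact Ideal.mem_map_of_mem _ (Ideal.subset_span ⟨i, rfl⟩)

theorem GA_exists {m : ℕ} {A : Type*} [CommRing A] [Algebra ℝ A]
    (φ : MvPolynomial (Fin m) ℝ →ₐ[ℝ] A)
    (h1 : ∀ f : A, ∃ (r : ℝ) (g : Fin m → A), f = algebraMap ℝ A r + ∑ i, φ (X i) * g i)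
    (h2 : ∀ K p, φ p ∈ ((idealOfVars (Fin m) ℝ).map φ) ^ K → p ∈ idealOfVars (Fin m) ℝ ^ K)
    {B : Type*} [CommRing B] [Algebra ℝ B] (n : Fin m → B) (hn : ∀ i, IsNilpotent (n i)) :
    ∃ a : A →ₐ[ℝ] B, ∀ i, a (φ (X i)) = n i := by
  have hrad : idealOfVars (Fin m) ℝ ≤ (RingHom.ker (aeval (R := ℝ) n)).radical := by
    rw [Ideal.span_le]
    rintro _ ⟨i, rfl⟩
    obtain ⟨k, hk⟩ := hn i
    exact ⟨k, by simp [RingHom.mem_ker, hk]⟩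
  obtain ⟨K, hK⟩ := Ideal.exists_pow_le_of_le_radical_of_fg hrad (idealOfVars_fg _ _)
  let J := ((idealOfVars (Fin m) ℝ).map φ) ^ K
  let ψ : MvPolynomial (Fin m) ℝ →ₐ[ℝ] A ⧸ J := (Ideal.Quotient.mkₐ ℝ J).comp φ
  have hψ : Function.Surjective ψ := by
    intro y
    obtain ⟨f, rfl⟩ := Ideal.Quotient.mk_surjective y
    obtain ⟨p, hp⟩ := GA_approx φ h1 K f
    exact ⟨p, ((Ideal.Quotient.mk_eq_mk_iff_sub_mem _ _).2 hp).symm⟩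
  have hker : ∀ p, p ∈ RingHom.ker ψ → aeval (R := ℝ) n p = 0 := by
    intro p hp
    exact hK (h2 K p (Ideal.Quotient.eq_zero_iff_mem.1 hp))
  let a := ((Ideal.Quotient.liftₐ (RingHom.ker ψ) (aeval (R := ℝ) n) hker).comp
    (Ideal.quotientKerAlgEquivOfSurjective hψ).symm.toAlgHom).comp (Ideal.Quotient.mkₐ ℝ J)
  refine ⟨a, fun i => ?_⟩
  have : (Ideal.quotientKerAlgEquivOfSurjective hψ).symm (ψ (X i)) = Ideal.Quotient.mk _ (X i) := by
    rw [AlgEquiv.symm_apply_eq]; rfl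
  change (Ideal.Quotient.liftₐ (RingHom.ker ψ) (aeval (R := ℝ) n) hker)
    ((Ideal.quotientKerAlgEquivOfSurjective hψ).symm (ψ (X i))) = _
  rw [this]
  exact (Ideal.Quotient.lift_mk _ _ _).trans (aeval_X _ i)

theorem GA_unique {m : ℕ} {A : Type*} [CommRing A] [Algebra ℝ A]
    (φ : MvPolynomial (Fin m) ℝ →ₐ[ℝ] A)
    (h1 : ∀ f : A, ∃ (r : ℝ) (g : Fin m → A), f = algebraMap ℝ A r + ∑ i, φ (X i) * g i)
    {B : Type*} [Ring B] [Algebra ℝ B] (n : Fin m → B) (hn : ∀ i, IsNilpotent (n i))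
    (a b : A →ₐ[ℝ] B) (ha : ∀ i, a (φ (X i)) = n i) (hb : ∀ i, b (φ (X i)) = n i) : a = b := by
  have hfg : ((idealOfVars (Fin m) ℝ).map φ).FG := (idealOfVars_fg _ _).map _
  have hr : ∀ a : A →ₐ[ℝ] B, (∀ i, a (φ (X i)) = n i) →
      ∃ K, ((idealOfVars (Fin m) ℝ).map φ) ^ K ≤ RingHom.ker a := by
    intro a ha
    refine Ideal.exists_pow_le_of_le_radical_of_fg ?_ hfg
    rw [Ideal.map_le_iff_le_comap, Ideal.span_le]
    rintro _ ⟨i, rfl⟩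
    obtain ⟨k, hk⟩ := hn i
    exact ⟨k, by simp [RingHom.mem_ker, ha, hk]⟩
  obtain ⟨K, hK⟩ := hr a ha
  obtain ⟨L, hL⟩ := hr b hb
  ext f
  obtain ⟨p, hp⟩ := GA_approx φ h1 (max K L) f
  have e1 := hK (Ideal.pow_le_pow_right (le_max_left K L) hp)
  have e2 := hL (Ideal.pow_le_pow_right (le_max_right K L) hp)
  rw [RingHom.mem_ker, map_sub, sub_eq_zero] at e1 e2
  rw [e1, e2]
  have : a.comp φ = b.comp φ := by
    apply MvPolynomial.algHom_ext
    intro i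
    simp [ha, hb]
  exact DFunLike.congr_fun this p

end

theorem GA_algebraMap_germ {m : ℕ} (x : Fin m → ℝ) (r : ℝ) :
    ((algebraMap ℝ (SmoothGermAt m x) r : SmoothGermAt m x) : Filter.Germ (𝓝 x) ℝ) =
      ((fun _ => r : (Fin m → ℝ) → ℝ) : Filter.Germ (𝓝 x) ℝ) := by
  change r • (1 : Filter.Germ (𝓝 x) ℝ) = _
  rw [show (1 : Filter.Germ (𝓝 x) ℝ) = ((fun _ => (1:ℝ)) : (Fin m → ℝ) → ℝ) from rfl,
      ← Filter.Germ.coe_smul]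
  exact congrArg _ (funext fun z => by simp [smul_eq_mul])

/-- Polynomials in the shifted coordinates, as smooth germs. -/
noncomputable def GA_phi (m : ℕ) (x : Fin m → ℝ) :
    MvPolynomial (Fin m) ℝ →ₐ[ℝ] SmoothGermAt m x :=
  MvPolynomial.aeval fun i => coordFunGermAt m x i - algebraMap ℝ _ (x i)

theorem GA_phi_X (m : ℕ) (x : Fin m → ℝ) (i : Fin m) : GA_phi m x (MvPolynomial.X i) =
    coordFunGermAt m x i - algebraMap ℝ _ (x i) := MvPolynomial.aeval_X _ i

theorem GA_phi_X_coe (m : ℕ) (x : Fin m → ℝ) (i : Fin m) :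
    (GA_phi m x (MvPolynomial.X i) : Filter.Germ (𝓝 x) ℝ) =
      ((fun y => y i - x i : (Fin m → ℝ) → ℝ) : Filter.Germ (𝓝 x) ℝ) := by
  rw [GA_phi_X, AddSubgroupClass.coe_sub, GA_algebraMap_germ]
  rfl

theorem GA_phi_coe (m : ℕ) (x : Fin m → ℝ) (p : MvPolynomial (Fin m) ℝ) :
    (GA_phi m x p : Filter.Germ (𝓝 x) ℝ) =
      ((fun y => MvPolynomial.eval (y - x) p : (Fin m → ℝ) → ℝ) : Filter.Germ (𝓝 x) ℝ) := by
  induction p using MvPolynomial.induction_on with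
  | C r =>
    have : GA_phi m x (MvPolynomial.C r) = algebraMap ℝ _ r := (GA_phi m x).commutes r
    rw [this, GA_algebraMap_germ]
    simp
  | add p q hp hq =>
    rw [map_add]
    change (GA_phi m x p : Filter.Germ (𝓝 x) ℝ) + (GA_phi m x q : Filter.Germ (𝓝 x) ℝ) = _
    rw [hp, hq, ← Filter.Germ.coe_add]
    exact congrArg _ (funext fun z => by simp)
  | mul_X p i hp =>
    rw [map_mul]
    change (GA_phi m x p : Filter.Germ (𝓝 x) ℝ) *
      (GA_phi m x (MvPolynomial.X i) : Filter.Germ (𝓝 x) ℝ) = _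
    rw [hp, GA_phi_X_coe, ← Filter.Germ.coe_mul]
    exact congrArg _ (funext fun z => by simp)

theorem GA_decomp (m : ℕ) (x : Fin m → ℝ) (F : SmoothGermAt m x) :
    ∃ (r : ℝ) (g : Fin m → SmoothGermAt m x),
      F = algebraMap ℝ _ r + ∑ i, GA_phi m x (MvPolynomial.X i) * g i := by
  obtain ⟨_, f, ⟨U, hU, hxU, hf⟩, rfl⟩ := F
  obtain ⟨f', hf', hff'⟩ := GA_extend f x U hU hxU hf
  obtain ⟨g, hg, hfg⟩ := GA_hadamard_global f' hf' x
  refine ⟨f' x, fun i => ⟨(g i : Filter.Germ (𝓝 x) ℝ),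
    g i, ⟨Set.univ, isOpen_univ, trivial, (hg i).contDiffOn⟩, rfl⟩, ?_⟩
  apply Subtype.ext
  rw [AddMemClass.coe_add, AddSubmonoidClass.coe_finsetSum, GA_algebraMap_germ]
  simp only [MulMemClass.coe_mul, GA_phi_X_coe, ← Filter.Germ.coe_mul]
  have hs : ∀ h : Fin m → (Fin m → ℝ) → ℝ, ∑ i, ((h i : Filter.Germ (𝓝 x) ℝ)) =
      ((∑ i, h i : (Fin m → ℝ) → ℝ) : Filter.Germ (𝓝 x) ℝ) := fun h =>
    (map_sum (Filter.Germ.coeRingHom (R := ℝ) (𝓝 x)) h Finset.univ).symm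
  rw [hs, ← Filter.Germ.coe_add]
  apply Filter.Germ.coe_eq.2
  filter_upwards [hff'] with y hy
  rw [← hy, hfg y]
  simp

/-- The ideal of smooth germs vanishing to order `K` at `x`. -/
noncomputable def GA_ordIdeal (m : ℕ) (x : Fin m → ℝ) (K : ℕ) : Ideal (SmoothGermAt m x) where
  carrier := {F | ∃ f : (Fin m → ℝ) → ℝ, (F : Filter.Germ (𝓝 x) ℝ) = (f : Filter.Germ (𝓝 x) ℝ) ∧
    f =O[𝓝 x] fun y => ‖y - x‖ ^ K}
  add_mem' := by
    rintro F G ⟨f, hf, hf'⟩ ⟨g, hg, hg'⟩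
    exact ⟨f + g, by rw [AddMemClass.coe_add, hf, hg, Filter.Germ.coe_add], hf'.add hg'⟩
  zero_mem' := ⟨fun _ => 0, rfl, Asymptotics.isBigO_zero _ _⟩
  smul_mem' := by
    rintro ⟨_, f, ⟨U, hU, hxU, hf⟩, rfl⟩ G ⟨g, hg, hg'⟩
    refine ⟨f * g, by rw [smul_eq_mul, MulMemClass.coe_mul, hg, Filter.Germ.coe_mul], ?_⟩
    have h1 : f =O[𝓝 x] fun _ => (1 : ℝ) :=
      (hf.continuousOn.continuousAt (hU.mem_nhds hxU)).isBigO_one ℝ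
    have h2 := h1.mul hg'
    simp only [one_mul] at h2
    exact h2

theorem GA_le_ord (m : ℕ) (x : Fin m → ℝ) (K : ℕ) :
    ((MvPolynomial.idealOfVars (Fin m) ℝ).map (GA_phi m x)) ^ K ≤ GA_ordIdeal m x K := by
  induction K with
  | zero =>
    rintro ⟨_, f, ⟨U, hU, hxU, hf⟩, rfl⟩ -
    refine ⟨f, rfl, ?_⟩
    simpa using (hf.continuousOn.continuousAt (hU.mem_nhds hxU)).isBigO_one ℝ
  | succ K ih =>
    have h1 : (MvPolynomial.idealOfVars (Fin m) ℝ).map (GA_phi m x) ≤ GA_ordIdeal m x 1 := by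
      rw [Ideal.map_le_iff_le_comap, Ideal.span_le]
      rintro _ ⟨i, rfl⟩
      refine ⟨_, GA_phi_X_coe m x i, ?_⟩
      refine Asymptotics.IsBigO.of_bound 1 (Filter.Eventually.of_forall fun y => ?_)
      simpa using norm_le_pi_norm (y - x) i
    rw [pow_succ, Ideal.mul_le]
    intro F hF G hG
    obtain ⟨f, hf, hf'⟩ := ih hF
    obtain ⟨g, hg, hg'⟩ := h1 hG
    refine ⟨f * g, by rw [MulMemClass.coe_mul, hf, hg, Filter.Germ.coe_mul], ?_⟩
    have h2 := hf'.mul hg'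
    simp only [← pow_add] at h2
    exact h2

theorem GA_inj (m : ℕ) (x : Fin m → ℝ) (K : ℕ) (p : MvPolynomial (Fin m) ℝ)
    (hp : GA_phi m x p ∈ ((MvPolynomial.idealOfVars (Fin m) ℝ).map (GA_phi m x)) ^ K) :
    p ∈ MvPolynomial.idealOfVars (Fin m) ℝ ^ K := by
  obtain ⟨f, hf, hf'⟩ := GA_le_ord m x K hp
  rw [GA_phi_coe] at hf
  exact GA_poly p x K (hf'.congr' (Filter.Germ.coe_eq.1 hf).symm .rfl)

/-- **Lemma 3.11.** Let `x₀ ∈ ℝ^m` and let `c 1, …, c m` be pairwise commuting elements of the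
Grassmann algebra `λ_N = ExteriorAlgebra ℝ (Fin N → ℝ)` whose augmentations are the
coordinates of `x₀`. Then there is exactly one `ℝ`-algebra homomorphism from the algebra
`C^∞_{x₀}` of germs at `x₀` of smooth real-valued functions to `λ_N` sending the germ of the
`i`-th coordinate function to `c i` for every `i`. -/
theorem existsUnique_algHom_smoothGermAt (m N : ℕ) (x₀ : Fin m → ℝ)
    (c : Fin m → ExteriorAlgebra ℝ (Fin N → ℝ))
    (hcomm : ∀ i j, c i * c j = c j * c i)
    (hc : ∀ i, ExteriorAlgebra.algebraMapInv (c i) = x₀ i) :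
    ∃! a : SmoothGermAt m x₀ →ₐ[ℝ] ExteriorAlgebra ℝ (Fin N → ℝ),
      ∀ i : Fin m, a (coordFunGermAt m x₀ i) = c i := by
  have hn : ∀ i, IsNilpotent (c i - algebraMap ℝ _ (x₀ i)) := fun i =>
    GA_nilp N _ (by rw [map_sub, hc, AlgHom.commutes]; simp)
  have hX : ∀ (a : SmoothGermAt m x₀ →ₐ[ℝ] ExteriorAlgebra ℝ (Fin N → ℝ)) (i : Fin m),
      a (coordFunGermAt m x₀ i) = c i ↔
      a (GA_phi m x₀ (MvPolynomial.X i)) = c i - algebraMap ℝ _ (x₀ i) := by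
    intro a i
    rw [GA_phi_X, map_sub, AlgHom.commutes, sub_left_inj]
  let S := Algebra.adjoin ℝ (Set.range c)
  letI : CommRing S := Algebra.adjoinCommRingOfComm ℝ (by
    rintro _ ⟨i, rfl⟩ _ ⟨j, rfl⟩
    exact hcomm i j)
  let n : Fin m → S := fun i => ⟨c i, Algebra.subset_adjoin ⟨i, rfl⟩⟩ - algebraMap ℝ S (x₀ i)
  have hnS : ∀ i, IsNilpotent (n i) := by
    intro i
    obtain ⟨k, hk⟩ := hn i
    exact ⟨k, Subtype.ext hk⟩
  obtain ⟨a, ha⟩ := GA_exists (GA_phi m x₀) (GA_decomp m x₀) (GA_inj m x₀) n hnS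
  refine ⟨S.val.comp a, fun i => ?_, fun b hb => ?_⟩
  · rw [hX]
    change ((a (GA_phi m x₀ (MvPolynomial.X i)) : S) : ExteriorAlgebra ℝ (Fin N → ℝ)) = _
    rw [ha]
    rfl
  · refine GA_unique (GA_phi m x₀) (GA_decomp m x₀) _ hn _ _ (fun i => (hX b i).1 (hb i)) ?_
    intro i
    change ((a (GA_phi m x₀ (MvPolynomial.X i)) : S) : ExteriorAlgebra ℝ (Fin N → ℝ)) = _
    rw [ha]
    rfl
end

section
/- Let A be a commutative unital ℝ-algebra, m ∈ ℕ, x₀ ∈ ℝ^m, and let a_1, …, a_m ∈ A be nilpotent elements. Then the map T : C^∞_{x₀} → A defined by T(f) = Σ_{α ∈ ℕ^m} (1/α!)·(∂^α f)(x₀) • a_1^{α_1} ⋯ a_m^{α_m} — where ∂^α f denotes the iterated partial derivative of f of multi-index α, α! = α_1!⋯α_m!, and the sum is finite because all but finitely many monomials a_1^{α_1}⋯a_m^{α_m} vanish by nilpotency — is a well-defined ℝ-algebra homomorphism. -/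
open Filter Topology

/-- The partial derivative `∂_i f` of a function `f : ℝ^m → ℝ`. -/
noncomputable def partialDeriv' {m : ℕ} (i : Fin m) (f : (Fin m → ℝ) → ℝ) :
    (Fin m → ℝ) → ℝ :=
  fun z => fderiv ℝ f z (Pi.single i 1)

/-- The iterated partial derivative `∂^α f = ∂_0^{α 0} ⋯ ∂_{m-1}^{α (m-1)} f` of a function
`f : ℝ^m → ℝ`, for a multi-index `α : Fin m → ℕ`. (For smooth `f` the order of the partial
derivatives is immaterial.) -/
noncomputable def multiDeriv {m : ℕ} (α : Fin m → ℕ) (f : (Fin m → ℝ) → ℝ) :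
    (Fin m → ℝ) → ℝ :=
  (List.finRange m).foldr (fun i g => (partialDeriv' i)^[α i] g) f

namespace TaylorSubst

open MvPowerSeries

theorem finsupp_ind {σ : Type*} {P : (σ →₀ ℕ) → Prop} (h0 : P 0)
    (hs : ∀ n i, P n → P (n + Finsupp.single i 1)) (n : σ →₀ ℕ) : P n := by
  have key : ∀ n : σ →₀ ℕ, ∀ k, P k → P (k + n) := by
    intro n
    induction n using Finsupp.induction_linear with
    | zero => intro k hk; simpa using hk
    | add f g hf hg => intro k hk; rw [← add_assoc]; exact hg _ (hf _ hk)
    | single i c =>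
      induction c with
      | zero => intro k hk; simpa using hk
      | succ c ih =>
        intro k hk
        rw [Finsupp.single_add, ← add_assoc]
        exact hs _ _ (ih _ hk)
  simpa using key n 0 h0

section eval

variable {A : Type*} [CommRing A] [Algebra ℝ A] {m : ℕ}

/-- Monomials in the `a i`. -/
def mon (a : Fin m → A) (n : Fin m →₀ ℕ) : A := ∏ i, a i ^ n i

set_option linter.unusedSectionVars false

theorem mon_add (a : Fin m → A) (n k : Fin m →₀ ℕ) : mon a (n + k) = mon a n * mon a k := by
  simp [mon, pow_add, Finset.prod_mul_distrib]

theorem exists_bound (a : Fin m → A) (ha : ∀ i, IsNilpotent (a i)) :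
    ∃ b : Fin m →₀ ℕ, ∀ n, ¬ n ≤ b → mon a n = 0 := by
  choose N hN using ha
  refine ⟨Finsupp.equivFunOnFinite.symm N, fun n hn => ?_⟩
  rw [Finsupp.le_def] at hn
  push Not at hn
  obtain ⟨i, hi⟩ := hn
  exact Finset.prod_eq_zero (Finset.mem_univ i) (pow_eq_zero_of_le (le_of_lt hi) (hN i))

/-- Truncated evaluation. -/
noncomputable def ev (a : Fin m → A) (b : Fin m →₀ ℕ) (φ : MvPowerSeries (Fin m) ℝ) : A :=
  ∑ n ∈ Finset.Iic b, coeff n φ • mon a n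

theorem ev_mono (a : Fin m → A) {b b' : Fin m →₀ ℕ} (hb : ∀ n, ¬ n ≤ b → mon a n = 0)
    (h : b ≤ b') (φ : MvPowerSeries (Fin m) ℝ) : ev a b φ = ev a b' φ := by
  refine Finset.sum_subset (Finset.Iic_subset_Iic.2 h) fun n _ hn => ?_
  rw [hb n (by simpa using hn), smul_zero]

theorem ev_mul (a : Fin m → A) {b : Fin m →₀ ℕ} (hb : ∀ n, ¬ n ≤ b → mon a n = 0)
    (φ ψ : MvPowerSeries (Fin m) ℝ) : ev a b (φ * ψ) = ev a b φ * ev a b ψ := by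
  classical
  rw [ev_mono a hb (le_add_of_nonneg_right (zero_le (a := b)) : b ≤ b + b)]
  simp only [ev]
  rw [Finset.sum_mul_sum, ← Finset.sum_product',
    ← Finset.sum_fiberwise_of_maps_to (s := Finset.Iic b ×ˢ Finset.Iic b)
      (t := Finset.Iic (b + b)) (g := fun p => p.1 + p.2)]
  · refine Finset.sum_congr rfl fun n _ => ?_
    rw [coeff_mul, Finset.sum_smul]
    symm
    refine Eq.trans (Finset.sum_subset (s₂ := Finset.HasAntidiagonal.antidiagonal n) ?_ ?_)
      (Finset.sum_congr rfl ?_)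
    · intro p hp
      simp only [Finset.mem_filter] at hp
      simpa using hp.2
    · rintro ⟨p, q⟩ hp hp'
      simp only [Finset.HasAntidiagonal.mem_antidiagonal] at hp
      simp only [Finset.mem_filter, Finset.mem_product, Finset.mem_Iic, hp, and_true] at hp'
      by_cases h : p ≤ b
      · have : ¬ q ≤ b := fun h' => hp' ⟨h, h'⟩
        simp [hb q this]
      · simp [hb p h]
    · rintro ⟨p, q⟩ hp
      simp only [Finset.HasAntidiagonal.mem_antidiagonal] at hp
      simp only
      rw [← hp, mon_add, smul_mul_smul_comm]
  · rintro ⟨p, q⟩ hp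
    simp only [Finset.mem_product, Finset.mem_Iic] at hp ⊢
    exact add_le_add hp.1 hp.2

theorem ev_add (a : Fin m → A) (b : Fin m →₀ ℕ)
    (φ ψ : MvPowerSeries (Fin m) ℝ) : ev a b (φ + ψ) = ev a b φ + ev a b ψ := by
  simp [ev, add_smul, Finset.sum_add_distrib]

theorem ev_C (a : Fin m → A) (b : Fin m →₀ ℕ) (c : ℝ) :
    ev a b (C c) = algebraMap ℝ A c := by
  classical
  rw [ev, Finset.sum_eq_single 0]
  · simp [mon, Algebra.algebraMap_eq_smul_one]
  · intro n _ hn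
    simp [coeff_C, hn]
  · simp

theorem ev_eq_finsum (a : Fin m → A) {b : Fin m →₀ ℕ} (hb : ∀ n, ¬ n ≤ b → mon a n = 0)
    (φ : MvPowerSeries (Fin m) ℝ) :
    ev a b φ = ∑ᶠ α : Fin m → ℕ, coeff (Finsupp.equivFunOnFinite.symm α) φ • ∏ i, a i ^ α i := by
  rw [← finsum_comp_equiv (Finsupp.equivFunOnFinite : (Fin m →₀ ℕ) ≃ (Fin m → ℕ))]
  rw [finsum_eq_sum_of_support_subset (s := Finset.Iic b)]
  · simp [ev, mon]
  · intro n hn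
    by_contra h
    apply hn
    have := hb n (by simpa using h)
    simp only [mon] at this
    simp [this]

end eval

section deriv

variable {m : ℕ} {x₀ : Fin m → ℝ}

/-- Smoothness near `x₀`. -/
def Sm (x₀ : Fin m → ℝ) (f : (Fin m → ℝ) → ℝ) : Prop :=
  ∀ᶠ y in 𝓝 x₀, ContDiffAt ℝ (⊤ : ℕ∞) f y

theorem sm_of {f : (Fin m → ℝ) → ℝ}
    (hf : ∃ U : Set (Fin m → ℝ), IsOpen U ∧ x₀ ∈ U ∧ ContDiffOn ℝ (⊤ : ℕ∞) f U) : Sm x₀ f := by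
  obtain ⟨U, hU, hx, hf⟩ := hf
  filter_upwards [hU.mem_nhds hx] with y hy
  exact hf.contDiffAt (hU.mem_nhds hy)

theorem Sm.pd {f : (Fin m → ℝ) → ℝ} (hf : Sm x₀ f) (i : Fin m) : Sm x₀ (partialDeriv' i f) := by
  filter_upwards [hf] with y hy
  have : ContDiffAt ℝ (⊤ : ℕ∞) (fderiv ℝ f) y := hy.fderiv_right (by simp)
  exact this.clm_apply contDiffAt_const

theorem Sm.add {f g : (Fin m → ℝ) → ℝ} (hf : Sm x₀ f) (hg : Sm x₀ g) : Sm x₀ (f + g) := by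
  filter_upwards [hf, hg] with y h1 h2 using h1.add h2

theorem Sm.mul {f g : (Fin m → ℝ) → ℝ} (hf : Sm x₀ f) (hg : Sm x₀ g) : Sm x₀ (f * g) := by
  filter_upwards [hf, hg] with y h1 h2 using h1.mul h2

theorem pd_congr {f g : (Fin m → ℝ) → ℝ} (h : f =ᶠ[𝓝 x₀] g) (i : Fin m) :
    partialDeriv' i f =ᶠ[𝓝 x₀] partialDeriv' i g := by
  filter_upwards [h.fderiv (𝕜 := ℝ)] with y hy
  simp [partialDeriv', hy]

theorem pd_add {f g : (Fin m → ℝ) → ℝ} (hf : Sm x₀ f) (hg : Sm x₀ g) (i : Fin m) :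
    partialDeriv' i (f + g) =ᶠ[𝓝 x₀] partialDeriv' i f + partialDeriv' i g := by
  filter_upwards [hf, hg] with y h1 h2
  simp [partialDeriv', fderiv_add (h1.differentiableAt (by simp)) (h2.differentiableAt (by simp))]

theorem pd_mul {f g : (Fin m → ℝ) → ℝ} (hf : Sm x₀ f) (hg : Sm x₀ g) (i : Fin m) :
    partialDeriv' i (f * g) =ᶠ[𝓝 x₀] f * partialDeriv' i g + g * partialDeriv' i f := by
  filter_upwards [hf, hg] with y h1 h2
  simp [partialDeriv', fderiv_mul (h1.differentiableAt (by simp)) (h2.differentiableAt (by simp))]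

theorem pd_comm {f : (Fin m → ℝ) → ℝ} (hf : Sm x₀ f) (i j : Fin m) :
    partialDeriv' i (partialDeriv' j f) =ᶠ[𝓝 x₀] partialDeriv' j (partialDeriv' i f) := by
  filter_upwards [hf] with y hy
  have h1 : ContDiffAt ℝ (⊤ : ℕ∞) (fderiv ℝ f) y := hy.fderiv_right (by simp)
  have h2 : DifferentiableAt ℝ (fderiv ℝ f) y := h1.differentiableAt (by simp)
  have hs : IsSymmSndFDerivAt ℝ f y :=
    hy.isSymmSndFDerivAt (by simp; exact WithTop.coe_le_coe.2 le_top)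
  have key : ∀ i j : Fin m, partialDeriv' i (partialDeriv' j f) y
      = fderiv ℝ (fderiv ℝ f) y (Pi.single i 1) (Pi.single j 1) := by
    intro i j
    have : HasFDerivAt (partialDeriv' j f) _ y :=
      h2.hasFDerivAt.clm_apply (hasFDerivAt_const (Pi.single j (1 : ℝ) : Fin m → ℝ) y)
    rw [partialDeriv', this.fderiv]
    simp
  rw [key, key]
  exact hs _ _

theorem Sm.iter {f : (Fin m → ℝ) → ℝ} (hf : Sm x₀ f) (i : Fin m) (k : ℕ) :
    Sm x₀ ((partialDeriv' i)^[k] f) := by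
  induction k with
  | zero => exact hf
  | succ k ih => rw [Function.iterate_succ_apply']; exact ih.pd i

theorem iter_congr {f g : (Fin m → ℝ) → ℝ} (h : f =ᶠ[𝓝 x₀] g) (i : Fin m) (k : ℕ) :
    (partialDeriv' i)^[k] f =ᶠ[𝓝 x₀] (partialDeriv' i)^[k] g := by
  induction k with
  | zero => exact h
  | succ k ih => simp only [Function.iterate_succ_apply']; exact pd_congr ih i

theorem iter_pd {f : (Fin m → ℝ) → ℝ} (hf : Sm x₀ f) (i j : Fin m) (k : ℕ) :
    (partialDeriv' i)^[k] (partialDeriv' j f) =ᶠ[𝓝 x₀]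
      partialDeriv' j ((partialDeriv' i)^[k] f) := by
  induction k with
  | zero => rfl
  | succ k ih =>
    simp only [Function.iterate_succ_apply']
    exact (pd_congr ih i).trans (pd_comm (hf.iter i k) i j)

/-- Iterated derivative along a list of indices. -/
noncomputable def LD (l : List (Fin m)) (α : Fin m → ℕ) (f : (Fin m → ℝ) → ℝ) :
    (Fin m → ℝ) → ℝ :=
  l.foldr (fun i g => (partialDeriv' i)^[α i] g) f

theorem LD_cons (j : Fin m) (l : List (Fin m)) (α : Fin m → ℕ) (f : (Fin m → ℝ) → ℝ) :
    LD (j :: l) α f = (partialDeriv' j)^[α j] (LD l α f) := rfl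

theorem Sm.LD {f : (Fin m → ℝ) → ℝ} (hf : Sm x₀ f) (l : List (Fin m)) (α : Fin m → ℕ) :
    Sm x₀ (LD l α f) := by
  induction l with
  | nil => exact hf
  | cons j l ih => exact ih.iter j _

theorem LD_congr {f g : (Fin m → ℝ) → ℝ} (h : f =ᶠ[𝓝 x₀] g) (l : List (Fin m)) (α : Fin m → ℕ) :
    LD l α f =ᶠ[𝓝 x₀] LD l α g := by
  induction l with
  | nil => exact h
  | cons j l ih => exact iter_congr ih j _

theorem LD_pd {f : (Fin m → ℝ) → ℝ} (hf : Sm x₀ f) (l : List (Fin m)) (α : Fin m → ℕ)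
    (i : Fin m) : LD l α (partialDeriv' i f) =ᶠ[𝓝 x₀] partialDeriv' i (LD l α f) := by
  induction l with
  | nil => rfl
  | cons j l ih => exact (iter_congr ih j _).trans (iter_pd (hf.LD l α) j i _)

theorem LD_not_mem (f : (Fin m → ℝ) → ℝ) (l : List (Fin m)) (α β : Fin m → ℕ)
    (h : ∀ j ∈ l, α j = β j) : LD l α f = LD l β f := by
  induction l with
  | nil => rfl
  | cons j l ih =>
    rw [LD_cons, LD_cons, h j (by simp), ih fun k hk => h k (by simp [hk])]

theorem LD_succ {f : (Fin m → ℝ) → ℝ} (hf : Sm x₀ f) (l : List (Fin m)) (hl : l.Nodup)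
    (α : Fin m → ℕ) (i : Fin m) (hi : i ∈ l) :
    LD l (α + Pi.single i 1) f =ᶠ[𝓝 x₀] LD l α (partialDeriv' i f) := by
  induction l with
  | nil => simp at hi
  | cons j l ih =>
    rw [List.nodup_cons] at hl
    rw [LD_cons, LD_cons]
    by_cases h : i = j
    · subst h
      rw [LD_not_mem f l (α + Pi.single i 1) α]
      · simp only [Pi.add_apply, Pi.single_eq_same]
        rw [Function.iterate_succ_apply]
        exact iter_congr (LD_pd hf l α i).symm i _
      · intro k hk
        have : k ≠ i := fun h => hl.1 (h ▸ hk)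
        simp [this]
    · have hi' : i ∈ l := by simpa [h] using hi
      have : (α + Pi.single i 1 : Fin m → ℕ) j = α j := by simp [Ne.symm h]
      rw [this]
      exact iter_congr (ih hl.2 hi') j _

theorem multiDeriv_succ {f : (Fin m → ℝ) → ℝ} (hf : Sm x₀ f) (α : Fin m → ℕ) (i : Fin m) :
    multiDeriv (α + Pi.single i 1) f x₀ = multiDeriv α (partialDeriv' i f) x₀ :=
  (LD_succ hf _ (List.nodup_finRange m) α i (List.mem_finRange i)).eq_of_nhds

/-- The Taylor series. -/
noncomputable def τ (x₀ : Fin m → ℝ) (f : (Fin m → ℝ) → ℝ) : MvPowerSeries (Fin m) ℝ :=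
  fun n => (∏ i, ((n i).factorial : ℝ))⁻¹ * multiDeriv n f x₀

theorem coeff_τ (f : (Fin m → ℝ) → ℝ) (n : Fin m →₀ ℕ) :
    coeff n (τ x₀ f) = (∏ i, ((n i).factorial : ℝ))⁻¹ * multiDeriv n f x₀ := rfl

theorem τ_congr {f g : (Fin m → ℝ) → ℝ} (h : f =ᶠ[𝓝 x₀] g) : τ x₀ f = τ x₀ g := by
  ext n
  rw [coeff_τ, coeff_τ]
  congr 1
  exact (LD_congr h _ _).eq_of_nhds

theorem coeff_zero_τ (f : (Fin m → ℝ) → ℝ) : coeff 0 (τ x₀ f) = f x₀ := by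
  have : ∀ l : List (Fin m), LD l (0 : Fin m → ℕ) f = f := by
    intro l
    induction l with
    | nil => rfl
    | cons j l ih => rw [LD_cons, ih]; rfl
  have h2 : multiDeriv (0 : Fin m → ℕ) f = f := this _
  rw [coeff_τ]
  simp [h2]

theorem pderiv_τ {f : (Fin m → ℝ) → ℝ} (hf : Sm x₀ f) (i : Fin m) :
    pderiv ℝ i (τ x₀ f) = τ x₀ (partialDeriv' i f) := by
  ext n
  rw [coeff_pderiv, coeff_τ, coeff_τ, ← multiDeriv_succ hf]
  have h1 : ((n + Finsupp.single i 1 : Fin m →₀ ℕ) : Fin m → ℕ) = (⇑n + Pi.single i 1 : Fin m → ℕ) := by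
    ext j; simp [Finsupp.single_apply, Pi.single_apply, eq_comm]
  rw [h1]
  have h2 : (∏ j, (((⇑n + Pi.single i 1 : Fin m → ℕ) j).factorial : ℝ))
      = (∏ j, ((n j).factorial : ℝ)) * (n i + 1) := by
    rw [← Finset.mul_prod_erase _ _ (Finset.mem_univ i),
      ← Finset.mul_prod_erase Finset.univ (fun j => ((n j).factorial : ℝ)) (Finset.mem_univ i)]
    rw [Finset.prod_congr rfl (g := fun j => ((n j).factorial : ℝ))]
    · simp [Nat.factorial_succ]; ring
    · intro j hj
      simp [Finset.ne_of_mem_erase hj]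
  rw [h2]
  have : (n i + 1 : ℝ) ≠ 0 := by positivity
  field_simp

theorem coeff_succ_eq {φ ψ : MvPowerSeries (Fin m) ℝ} {n : Fin m →₀ ℕ} {i : Fin m}
    (h : coeff n (pderiv ℝ i φ) = coeff n (pderiv ℝ i ψ)) :
    coeff (n + Finsupp.single i 1) φ = coeff (n + Finsupp.single i 1) ψ := by
  rw [coeff_pderiv, coeff_pderiv] at h
  have : (n i + 1 : ℝ) ≠ 0 := by positivity
  exact mul_right_cancel₀ this h

theorem τ_add {f g : (Fin m → ℝ) → ℝ} (hf : Sm x₀ f) (hg : Sm x₀ g) :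
    τ x₀ (f + g) = τ x₀ f + τ x₀ g := by
  ext n
  induction n using finsupp_ind generalizing f g with
  | h0 => simp only [map_add, coeff_zero_τ]; rfl
  | hs n i ih =>
    apply coeff_succ_eq
    rw [pderiv_τ (hf.add hg), τ_congr (pd_add hf hg i), ih (hf.pd i) (hg.pd i),
      map_add (pderiv ℝ i), pderiv_τ hf, pderiv_τ hg]

theorem τ_mul {f g : (Fin m → ℝ) → ℝ} (hf : Sm x₀ f) (hg : Sm x₀ g) :
    τ x₀ (f * g) = τ x₀ f * τ x₀ g := by
  ext n
  induction n using finsupp_ind generalizing f g with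
  | h0 =>
    have := map_mul (constantCoeff (σ := Fin m) (R := ℝ)) (τ x₀ f) (τ x₀ g)
    simp only [← coeff_zero_eq_constantCoeff_apply] at this
    rw [this]
    simp only [coeff_zero_τ]; rfl
  | hs n i ih =>
    apply coeff_succ_eq
    rw [pderiv_τ (hf.mul hg), τ_congr (pd_mul hf hg i),
      τ_add (hf.mul (hg.pd i)) (hg.mul (hf.pd i)), map_add, ih hf (hg.pd i), ih hg (hf.pd i),
      Derivation.leibniz, pderiv_τ hf, pderiv_τ hg, map_add]
    rfl

theorem sm_const (c : ℝ) : Sm x₀ (fun _ => c) := Eventually.of_forall fun _ => contDiffAt_const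

theorem τ_const (c : ℝ) : τ x₀ (fun _ => c) = C c := by
  ext n
  induction n using finsupp_ind generalizing c with
  | h0 => simp [coeff_zero_τ]
  | hs n i ih =>
    apply coeff_succ_eq
    have : partialDeriv' i (fun _ : Fin m → ℝ => c) = fun _ => 0 := by
      ext y; simp [partialDeriv']
    rw [pderiv_τ (sm_const c), this, ih 0]
    simp

end deriv

end TaylorSubst

/-- **(Berezin's Grassmann-analytic continuation; formula (3.1) and Remark 3.5.)**
Let `A` be a commutative unital `ℝ`-algebra, `x₀ ∈ ℝ^m` and let `a 1, …, a m ∈ A` be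
nilpotent. Then the Taylor-substitution map
`T f = ∑_α (1/α!) · (∂^α f)(x₀) • a 1 ^ α 1 ⋯ a m ^ α m` (a finite sum, by nilpotency)
is a well-defined `ℝ`-algebra homomorphism on the algebra `C^∞_{x₀}` of germs at `x₀` of
smooth real-valued functions. -/
theorem exists_taylor_algHom (A : Type*) [CommRing A] [Algebra ℝ A] (m : ℕ)
    (x₀ : Fin m → ℝ) (a : Fin m → A) (ha : ∀ i, IsNilpotent (a i)) :
    ∃ T : SmoothGermAt m x₀ →ₐ[ℝ] A,
      ∀ (f : (Fin m → ℝ) → ℝ)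
        (hf : ∃ U : Set (Fin m → ℝ), IsOpen U ∧ x₀ ∈ U ∧ ContDiffOn ℝ (⊤ : ℕ∞) f U),
        T ⟨↑f, f, hf, rfl⟩ =
          ∑ᶠ α : Fin m → ℕ,
            ((∏ i, ((α i).factorial : ℝ))⁻¹ * multiDeriv α f x₀) • ∏ i, a i ^ α i := by
  classical
  obtain ⟨b, hb⟩ := TaylorSubst.exists_bound a ha
  let r : SmoothGermAt m x₀ → ((Fin m → ℝ) → ℝ) := fun φ => φ.2.choose
  have hr : ∀ φ, TaylorSubst.Sm x₀ (r φ) := fun φ => TaylorSubst.sm_of φ.2.choose_spec.1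
  have hr' : ∀ φ : SmoothGermAt m x₀, (φ : Filter.Germ (𝓝 x₀) ℝ) = ↑(r φ) := fun φ => φ.2.choose_spec.2
  have hτ : ∀ (φ : SmoothGermAt m x₀) (f : (Fin m → ℝ) → ℝ),
      (φ : Filter.Germ (𝓝 x₀) ℝ) = ↑f → TaylorSubst.τ x₀ (r φ) = TaylorSubst.τ x₀ f := by
    intro φ f h
    apply TaylorSubst.τ_congr
    rw [hr'] at h
    exact Filter.Germ.coe_eq.1 h
  have hc : ∀ c : ℝ, TaylorSubst.τ x₀ (r (algebraMap ℝ (SmoothGermAt m x₀) c))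
      = MvPowerSeries.C c := by
    intro c
    rw [hτ _ (fun _ => c), TaylorSubst.τ_const]
    show c • (1 : Filter.Germ (𝓝 x₀) ℝ) = _
    rw [show (1 : Filter.Germ (𝓝 x₀) ℝ) = ((fun _ => (1:ℝ)) : (Fin m → ℝ) → ℝ) from rfl,
      ← Filter.Germ.coe_smul]
    exact congrArg _ (funext fun z => by simp [smul_eq_mul])
  have hadd : ∀ φ ψ, TaylorSubst.τ x₀ (r (φ + ψ))
      = TaylorSubst.τ x₀ (r φ) + TaylorSubst.τ x₀ (r ψ) := by
    intro φ ψ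
    rw [← TaylorSubst.τ_add (hr φ) (hr ψ)]
    apply hτ
    rw [Filter.Germ.coe_add, ← hr', ← hr']
    rfl
  have hmul : ∀ φ ψ, TaylorSubst.τ x₀ (r (φ * ψ))
      = TaylorSubst.τ x₀ (r φ) * TaylorSubst.τ x₀ (r ψ) := by
    intro φ ψ
    rw [← TaylorSubst.τ_mul (hr φ) (hr ψ)]
    apply hτ
    rw [Filter.Germ.coe_mul, ← hr', ← hr']
    rfl
  refine ⟨{ toFun := fun φ => TaylorSubst.ev a b (TaylorSubst.τ x₀ (r φ))
            map_one' := ?_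
            map_mul' := ?_
            map_zero' := ?_
            map_add' := ?_
            commutes' := ?_ }, ?_⟩
  · have := hc 1
    rw [map_one] at this
    rw [this, TaylorSubst.ev_C, map_one]
  · intro φ ψ
    rw [hmul, TaylorSubst.ev_mul a hb]
  · have := hc 0
    rw [map_zero] at this
    rw [this, TaylorSubst.ev_C, map_zero]
  · intro φ ψ
    rw [hadd, TaylorSubst.ev_add]
  · intro c
    show TaylorSubst.ev a b (TaylorSubst.τ x₀ (r _)) = _
    rw [hc, TaylorSubst.ev_C]
  · intro f hf
    show TaylorSubst.ev a b (TaylorSubst.τ x₀ (r ⟨↑f, f, hf, rfl⟩)) = _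
    rw [hτ _ f rfl, TaylorSubst.ev_eq_finsum a hb]
    rfl
end

section
/- Fix an open set U ⊆ ℝ^n and q ∈ ℕ, let x ∈ U, let f be a C^∞ map from U to the Grassmann algebra λ_q, and let k ∈ ℕ. Then there exists an element p of A_x which is an ℝ-linear combination of products of at most k elements taken from the set consisting of the germs at x of the scalar coordinate functions y ↦ (y_i − x_i)·1 (i = 1, …, n) and the constant germs with value ι(e_j) (j = 1, …, q) (the empty product being 1), such that the germ of f at x minus p lies in m_x^{k+1}, the (k+1)-st power of the two-sided ideal m_x = {h ∈ A_x : ε(h(x)) = 0}. -/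
set_option synthInstance.maxHeartbeats 1000000
set_option maxHeartbeats 1000000

open Filter Topology

/-- The Grassmann algebra `λ_q = R[θ_1, …, θ_q]` over `ℝ`. -/
abbrev GrassmannAlg (q : ℕ) : Type := ExteriorAlgebra ℝ (Fin q → ℝ)

/-- `f : ℝ^n → λ_q` is `C^∞` on `U`.  Since `λ_q` is a finite-dimensional real vector space
(of dimension `2 ^ q`), smoothness with respect to any norm on `λ_q` (all of which are
equivalent) amounts to the existence of a finite decomposition `f = ∑ j, g j • b j` with
`C^∞` real-valued coefficient functions `g j` and constant vectors `b j ∈ λ_q`;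
we take this as the definition. -/
def ContDiffOnG {n q : ℕ} (f : (Fin n → ℝ) → GrassmannAlg q) (U : Set (Fin n → ℝ)) : Prop :=
  ∃ (k : ℕ) (g : Fin k → (Fin n → ℝ) → ℝ) (b : Fin k → GrassmannAlg q),
    (∀ j, ContDiffOn ℝ (⊤ : ℕ∞) (g j) U) ∧ ∀ y ∈ U, f y = ∑ j, g j y • b j

theorem ContDiffOnG.mul {n q : ℕ} {f g : (Fin n → ℝ) → GrassmannAlg q}
    {U V : Set (Fin n → ℝ)} (hf : ContDiffOnG f U) (hg : ContDiffOnG g V) :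
    ContDiffOnG (f * g) (U ∩ V) := by
  obtain ⟨k₁, g₁, b₁, hg₁, hfd⟩ := hf
  obtain ⟨k₂, g₂, b₂, hg₂, hgd⟩ := hg
  refine ⟨k₁ * k₂,
    fun p y => g₁ (finProdFinEquiv.symm p).1 y * g₂ (finProdFinEquiv.symm p).2 y,
    fun p => b₁ (finProdFinEquiv.symm p).1 * b₂ (finProdFinEquiv.symm p).2, ?_, ?_⟩
  · intro p
    exact ((hg₁ _).mono Set.inter_subset_left).mul ((hg₂ _).mono Set.inter_subset_right)
  · intro y hy
    have key : ∀ pr : Fin k₁ × Fin k₂,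
        (g₁ pr.1 y • b₁ pr.1) * (g₂ pr.2 y • b₂ pr.2)
          = (g₁ pr.1 y * g₂ pr.2 y) • (b₁ pr.1 * b₂ pr.2) := by
      intro pr
      rw [smul_mul_assoc, mul_smul_comm, smul_smul]
    calc (f * g) y = f y * g y := rfl
      _ = (∑ j, g₁ j y • b₁ j) * (∑ j, g₂ j y • b₂ j) := by rw [hfd y hy.1, hgd y hy.2]
      _ = ∑ j : Fin k₁, ∑ j' : Fin k₂, (g₁ j y • b₁ j) * (g₂ j' y • b₂ j') :=
        Finset.sum_mul_sum _ _ _ _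
      _ = ∑ pr : Fin k₁ × Fin k₂, (g₁ pr.1 y • b₁ pr.1) * (g₂ pr.2 y • b₂ pr.2) :=
        (Fintype.sum_prod_type
          (fun pr : Fin k₁ × Fin k₂ => (g₁ pr.1 y • b₁ pr.1) * (g₂ pr.2 y • b₂ pr.2))).symm
      _ = ∑ pr : Fin k₁ × Fin k₂, (g₁ pr.1 y * g₂ pr.2 y) • (b₁ pr.1 * b₂ pr.2) :=
        Finset.sum_congr rfl fun pr _ => key pr
      _ = ∑ p : Fin (k₁ * k₂), (g₁ (finProdFinEquiv.symm p).1 y * g₂ (finProdFinEquiv.symm p).2 y)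
            • (b₁ (finProdFinEquiv.symm p).1 * b₂ (finProdFinEquiv.symm p).2) :=
        (Equiv.sum_comp finProdFinEquiv.symm fun pr =>
          (g₁ pr.1 y * g₂ pr.2 y) • (b₁ pr.1 * b₂ pr.2)).symm

theorem ContDiffOnG.add {n q : ℕ} {f g : (Fin n → ℝ) → GrassmannAlg q}
    {U V : Set (Fin n → ℝ)} (hf : ContDiffOnG f U) (hg : ContDiffOnG g V) :
    ContDiffOnG (f + g) (U ∩ V) := by
  obtain ⟨k₁, g₁, b₁, hg₁, hfd⟩ := hf
  obtain ⟨k₂, g₂, b₂, hg₂, hgd⟩ := hg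
  refine ⟨k₁ + k₂, Fin.append g₁ g₂, Fin.append b₁ b₂, ?_, ?_⟩
  · intro j
    refine Fin.addCases (fun i => ?_) (fun i => ?_) j
    · rw [Fin.append_left]
      exact (hg₁ i).mono Set.inter_subset_left
    · rw [Fin.append_right]
      exact (hg₂ i).mono Set.inter_subset_right
  · intro y hy
    rw [Pi.add_apply, hfd y hy.1, hgd y hy.2, Fin.sum_univ_add]
    congr 1
    · exact Finset.sum_congr rfl fun i _ => by rw [Fin.append_left, Fin.append_left]
    · exact Finset.sum_congr rfl fun i _ => by rw [Fin.append_right, Fin.append_right]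

theorem ContDiffOnG.const {n q : ℕ} (c : GrassmannAlg q) :
    ContDiffOnG (fun _ : Fin n → ℝ => c) Set.univ := by
  refine ⟨1, fun _ _ => 1, fun _ => c, fun _ => contDiffOn_const, fun y _ => ?_⟩
  simp

/-- `A_x`: the `ℝ`-algebra of germs at `x ∈ ℝ^n` of `C^∞` maps from open neighbourhoods of
`x` to the Grassmann algebra `λ_q`; this is the stalk at `x` of the structure sheaf
`C^∞ ⊗ ⋀ (ℝ^q)*` of a Berezin–Kostant–Leites superdomain. -/
noncomputable def SmoothGermAtG (n q : ℕ) (x : Fin n → ℝ) :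
    Subalgebra ℝ (Filter.Germ (𝓝 x) (GrassmannAlg q)) where
  carrier := {φ | ∃ f : (Fin n → ℝ) → GrassmannAlg q,
    (∃ U : Set (Fin n → ℝ), IsOpen U ∧ x ∈ U ∧ ContDiffOnG f U) ∧ φ = ↑f}
  mul_mem' := by
    rintro φ ψ ⟨f, ⟨U, hU, hxU, hf⟩, rfl⟩ ⟨g, ⟨V, hV, hxV, hg⟩, rfl⟩
    exact ⟨f * g, ⟨U ∩ V, hU.inter hV, ⟨hxU, hxV⟩, hf.mul hg⟩,
      (Filter.Germ.coe_mul f g).symm ▸ rfl⟩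
  add_mem' := by
    rintro φ ψ ⟨f, ⟨U, hU, hxU, hf⟩, rfl⟩ ⟨g, ⟨V, hV, hxV, hg⟩, rfl⟩
    exact ⟨f + g, ⟨U ∩ V, hU.inter hV, ⟨hxU, hxV⟩, hf.add hg⟩,
      (Filter.Germ.coe_add f g).symm ▸ rfl⟩
  algebraMap_mem' := by
    intro c
    refine ⟨fun _ => algebraMap ℝ (GrassmannAlg q) c,
      ⟨Set.univ, isOpen_univ, trivial, ContDiffOnG.const _⟩, ?_⟩
    show c • (1 : Filter.Germ (𝓝 x) (GrassmannAlg q)) = _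
    rw [show (1 : Filter.Germ (𝓝 x) (GrassmannAlg q))
        = ((fun _ => (1 : GrassmannAlg q)) : (Fin n → ℝ) → GrassmannAlg q) from rfl,
      ← Filter.Germ.coe_smul]
    exact congrArg _ (funext fun z => (Algebra.algebraMap_eq_smul_one c).symm)

/-- The two-sided ideal `m_x = {h ∈ A_x ∣ ε (h x) = 0}` of the algebra `A_x` of germs at `x`
of smooth `λ_q`-valued maps, as an `ℝ`-submodule of `A_x` (its powers, formed via the
product of submodules of the algebra `A_x`, coincide with the powers of the two-sided
ideal `m_x`). -/
noncomputable def mGSub (n q : ℕ) (x : Fin n → ℝ) : Submodule ℝ (SmoothGermAtG n q x) where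
  carrier := {h | ExteriorAlgebra.algebraMapInv
    (Filter.Germ.value (h : Filter.Germ (𝓝 x) (GrassmannAlg q))) = 0}
  zero_mem' := by
    show ExteriorAlgebra.algebraMapInv
      (Filter.Germ.value (0 : Filter.Germ (𝓝 x) (GrassmannAlg q))) = 0
    have h0 : Filter.Germ.value (0 : Filter.Germ (𝓝 x) (GrassmannAlg q)) = 0 := rfl
    rw [h0, map_zero]
  add_mem' := by
    intro a b ha hb
    show ExteriorAlgebra.algebraMapInv
      (Filter.Germ.value ((a : Filter.Germ (𝓝 x) (GrassmannAlg q))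
        + (b : Filter.Germ (𝓝 x) (GrassmannAlg q)))) = 0
    have : Filter.Germ.value ((a : Filter.Germ (𝓝 x) (GrassmannAlg q))
        + (b : Filter.Germ (𝓝 x) (GrassmannAlg q)))
        = Filter.Germ.value (a : Filter.Germ (𝓝 x) (GrassmannAlg q))
          + Filter.Germ.value (b : Filter.Germ (𝓝 x) (GrassmannAlg q)) :=
      map_add Filter.Germ.valueAddHom _ _
    rw [this, map_add, ha, hb, add_zero]
  smul_mem' := by
    intro r h hh
    show ExteriorAlgebra.algebraMapInv
      (Filter.Germ.value (r • (h : Filter.Germ (𝓝 x) (GrassmannAlg q)))) = 0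
    have : Filter.Germ.value (r • (h : Filter.Germ (𝓝 x) (GrassmannAlg q)))
        = r • Filter.Germ.value (h : Filter.Germ (𝓝 x) (GrassmannAlg q)) :=
      map_smul (Filter.Germ.valueₗ (𝕜 := ℝ)) r _
    rw [this, map_smul, hh, smul_zero]

/-- The germ at `x` of the scalar coordinate function `y ↦ (y i - x i) · 1`, as an element
of `A_x`. -/
noncomputable def evenCoordGermG (n q : ℕ) (x : Fin n → ℝ) (i : Fin n) :
    SmoothGermAtG n q x :=
  ⟨(↑(fun y : Fin n → ℝ => algebraMap ℝ (GrassmannAlg q) (y i - x i)) :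
      Filter.Germ (𝓝 x) (GrassmannAlg q)),
    ⟨fun y => algebraMap ℝ (GrassmannAlg q) (y i - x i),
      ⟨Set.univ, isOpen_univ, trivial,
        ⟨1, fun _ y => y i - x i, fun _ => 1,
          fun _ => ((ContinuousLinearMap.proj (R := ℝ) (φ := fun _ : Fin n => ℝ) i).contDiff.sub
            contDiff_const).contDiffOn,
          fun y _ => by simp [Algebra.algebraMap_eq_smul_one]⟩⟩, rfl⟩⟩

/-- The constant germ at `x` with value the odd generator `θ_j = ι (e j)`, as an element
of `A_x`. -/
noncomputable def oddCoordGermG (n q : ℕ) (x : Fin n → ℝ) (j : Fin q) :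
    SmoothGermAtG n q x :=
  ⟨(↑(fun _ : Fin n → ℝ => ExteriorAlgebra.ι ℝ (Pi.single j (1 : ℝ) : Fin q → ℝ)) :
      Filter.Germ (𝓝 x) (GrassmannAlg q)),
    ⟨fun _ => ExteriorAlgebra.ι ℝ (Pi.single j (1 : ℝ) : Fin q → ℝ),
      ⟨Set.univ, isOpen_univ, trivial, ContDiffOnG.const _⟩, rfl⟩⟩

theorem contDiff_param_integral_nat {E : Type} [NormedAddCommGroup E] [NormedSpace ℝ E]
    [FiniteDimensional ℝ E] (m : ℕ) :
    ∀ {H : Type} [NormedAddCommGroup H] [NormedSpace ℝ H] [CompleteSpace H]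
      (F : E × ℝ → H), ContDiff ℝ m F → ContDiff ℝ m (fun y => ∫ t in (0:ℝ)..1, F (y, t)) := by
  induction m with
  | zero =>
    intro H _ _ _ F hF
    have hc : Continuous F := hF.continuous
    refine contDiff_zero.2 ?_
    exact intervalIntegral.continuous_parametric_intervalIntegral_of_continuous'
      (f := fun y t => F (y, t)) hc 0 1
  | succ m ih =>
    intro H _ _ _ F hF
    have hd : Differentiable ℝ F := hF.differentiable (by simp)
    have hF' : ContDiff ℝ m (fderiv ℝ F) := hF.fderiv_right (by simp)
    set D : E × ℝ → (E →L[ℝ] H) :=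
      fun p => (fderiv ℝ F p).comp (ContinuousLinearMap.inl ℝ E ℝ) with hD
    have hDc : ContDiff ℝ m D := hF'.clm_comp contDiff_const
    have key : ∀ y, HasFDerivAt (fun y => ∫ t in (0:ℝ)..1, F (y, t))
        (∫ t in (0:ℝ)..1, D (y, t)) y := by
      intro y
      have hcomp : IsCompact (Metric.closedBall y 1 ×ˢ Set.Icc (0:ℝ) 1) :=
        (isCompact_closedBall y 1).prod isCompact_Icc
      obtain ⟨C, hC⟩ := hcomp.exists_bound_of_continuousOn hDc.continuous.continuousOn
      have hFt : ∀ z, Continuous fun t : ℝ => F (z, t) := fun z =>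
        hF.continuous.comp (by fun_prop)
      refine intervalIntegral.hasFDerivAt_integral_of_dominated_of_fderiv_le
        (F := fun y t => F (y, t)) (F' := fun y t => D (y, t)) (bound := fun _ => C)
        (Metric.closedBall_mem_nhds y one_pos) ?_ ?_ ?_ ?_ ?_ ?_
      · exact Eventually.of_forall fun z => (hFt z).aestronglyMeasurable
      · exact (hFt y).intervalIntegrable _ _
      · exact (hDc.continuous.comp (by fun_prop : Continuous fun t : ℝ => (y, t))).aestronglyMeasurable
      · refine Eventually.of_forall fun t ht z hz => hC _ ⟨hz, ?_⟩
        rw [Set.uIoc_of_le zero_le_one] at ht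
        exact ⟨ht.1.le, ht.2⟩
      · exact intervalIntegrable_const
      · refine Eventually.of_forall fun t ht z hz => ?_
        exact (hd (z, t)).hasFDerivAt.comp z (hasFDerivAt_prodMk_left z t)
    rw [show ((m + 1 : ℕ) : WithTop ℕ∞) = (m : WithTop ℕ∞) + 1 by push_cast; rfl,
      contDiff_succ_iff_fderiv]
    refine ⟨fun y => (key y).differentiableAt, by simp, ?_⟩
    rw [show fderiv ℝ (fun y => ∫ t in (0:ℝ)..1, F (y, t)) = fun y => ∫ t in (0:ℝ)..1, D (y, t)
      from funext fun y => (key y).fderiv]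
    exact ih D hDc

theorem contDiff_param_integral {E H : Type} [NormedAddCommGroup E] [NormedSpace ℝ E]
    [FiniteDimensional ℝ E] [NormedAddCommGroup H] [NormedSpace ℝ H] [CompleteSpace H]
    (F : E × ℝ → H) (hF : ContDiff ℝ (⊤ : ℕ∞) F) :
    ContDiff ℝ (⊤ : ℕ∞) (fun y => ∫ t in (0:ℝ)..1, F (y, t)) := by
  rw [contDiff_infty]
  intro m
  exact contDiff_param_integral_nat m F (hF.of_le (by exact_mod_cast le_top))

theorem hadamard_global {n : ℕ} (x : Fin n → ℝ) (G : (Fin n → ℝ) → ℝ)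
    (hG : ContDiff ℝ (⊤ : ℕ∞) G) :
    ∃ h : Fin n → (Fin n → ℝ) → ℝ, (∀ i, ContDiff ℝ (⊤ : ℕ∞) (h i)) ∧
      ∀ y, G y = G x + ∑ i, (y i - x i) * h i y := by
  have hG' : ContDiff ℝ (⊤ : ℕ∞) (fderiv ℝ G) := hG.fderiv_right (by simp)
  have hd : Differentiable ℝ G := hG.differentiable (by simp)
  have hs : ∀ i : Fin n, ContDiff ℝ (⊤ : ℕ∞) (fun p : (Fin n → ℝ) × ℝ =>
      fderiv ℝ G (x + p.2 • (p.1 - x)) (Pi.single i 1)) := fun i =>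
    (hG'.comp (contDiff_const.add (contDiff_snd.smul (contDiff_fst.sub contDiff_const)))).clm_apply
      contDiff_const
  refine ⟨fun i y => ∫ t in (0:ℝ)..1, fderiv ℝ G (x + t • (y - x)) (Pi.single i 1),
    fun i => contDiff_param_integral _ (hs i), fun y => ?_⟩
  have hcont : ∀ i : Fin n, Continuous fun t : ℝ =>
      fderiv ℝ G (x + t • (y - x)) (Pi.single i 1) := fun i =>
    (hs i).continuous.comp (by fun_prop : Continuous fun t : ℝ => (y, t))
  have hder : ∀ t : ℝ, HasDerivAt (fun t : ℝ => G (x + t • (y - x)))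
      (∑ i, (y i - x i) * fderiv ℝ G (x + t • (y - x)) (Pi.single i 1)) t := by
    intro t
    have h1 : HasDerivAt (fun t : ℝ => x + t • (y - x)) (y - x) t := by
      simpa using ((hasDerivAt_id t).smul_const (y - x)).const_add x
    have h2 := (hd (x + t • (y - x))).hasFDerivAt.comp_hasDerivAt t h1
    have h3 := congrArg (fderiv ℝ G (x + t • (y - x))) (pi_eq_sum_univ' (y - x))
    rw [map_sum] at h3
    simp only [map_smul, smul_eq_mul, Pi.sub_apply] at h3
    rw [← h3]
    exact h2
  have := intervalIntegral.integral_eq_sub_of_hasDerivAt (a := 0) (b := 1)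
    (fun t _ => hder t) (Continuous.intervalIntegrable
      (continuous_finsetSum _ fun i _ => continuous_const.mul (hcont i)) _ _)
  rw [intervalIntegral.integral_finsetSum
    (fun i _ => ((hcont i).const_mul (y i - x i)).intervalIntegrable _ _)] at this
  simp only [intervalIntegral.integral_const_mul, one_smul, zero_smul, add_zero,
    add_sub_cancel] at this
  linarith

theorem hadamard_local {n : ℕ} {U : Set (Fin n → ℝ)} (hU : IsOpen U) (x : Fin n → ℝ) (hx : x ∈ U)
    (g : (Fin n → ℝ) → ℝ) (hg : ContDiffOn ℝ (⊤ : ℕ∞) g U) :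
    ∃ h : Fin n → (Fin n → ℝ) → ℝ, (∀ i, ContDiff ℝ (⊤ : ℕ∞) (h i)) ∧
      ∀ᶠ y in 𝓝 x, g y = g x + ∑ i, (y i - x i) * h i y := by
  obtain ⟨r, hr, hrU⟩ := Metric.isOpen_iff.1 hU x hx
  let φ : ContDiffBump x := ⟨r / 4, r / 2, by positivity, by linarith⟩
  have hφU : tsupport φ ⊆ U := by
    rw [φ.tsupport_eq]
    exact (Metric.closedBall_subset_ball (by change r / 2 < r; linarith)).trans hrU
  have hG : ContDiff ℝ (⊤ : ℕ∞) (fun y => φ y * g y) := by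
    rw [contDiff_iff_contDiffAt]
    intro y
    by_cases hy : y ∈ tsupport φ
    · exact φ.contDiff.contDiffAt.mul (hg.contDiffAt (hU.mem_nhds (hφU hy)))
    · have h0 : (fun y => φ y * g y) =ᶠ[𝓝 y] fun _ => 0 := by
        filter_upwards [notMem_tsupport_iff_eventuallyEq.1 hy] with z hz
        simp [hz]
      exact contDiffAt_const.congr_of_eventuallyEq h0
  obtain ⟨h, hh, hhe⟩ := hadamard_global x _ hG
  refine ⟨h, hh, ?_⟩
  have hx1 : φ x = 1 := φ.eventuallyEq_one.self_of_nhds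
  filter_upwards [φ.eventuallyEq_one] with y hy
  have := hhe y
  rw [hx1, hy] at this
  simpa using this

/-- The constant germs, as an algebra homomorphism. -/
noncomputable def constGermG (n q : ℕ) (x : Fin n → ℝ) :
    GrassmannAlg q →ₐ[ℝ] SmoothGermAtG n q x where
  toFun c := ⟨(↑(fun _ : Fin n → ℝ => c) : Filter.Germ (𝓝 x) (GrassmannAlg q)),
    fun _ => c, ⟨Set.univ, isOpen_univ, trivial, ContDiffOnG.const _⟩, rfl⟩
  map_one' := rfl
  map_mul' _ _ := rfl
  map_zero' := rfl
  map_add' _ _ := rfl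
  commutes' r := by
    apply Subtype.ext
    show _ = r • (1 : Filter.Germ (𝓝 x) (GrassmannAlg q))
    rw [show (1 : Filter.Germ (𝓝 x) (GrassmannAlg q))
        = ((fun _ => (1 : GrassmannAlg q)) : (Fin n → ℝ) → GrassmannAlg q) from rfl,
      ← Filter.Germ.coe_smul]
    exact congrArg _ (funext fun z => (Algebra.algebraMap_eq_smul_one r))

theorem contDiffOnG_scalar {n q : ℕ} {U : Set (Fin n → ℝ)} {g : (Fin n → ℝ) → ℝ}
    (hg : ContDiffOn ℝ (⊤ : ℕ∞) g U) :
    ContDiffOnG (fun y => algebraMap ℝ (GrassmannAlg q) (g y)) U :=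
  ⟨1, fun _ => g, fun _ => 1, fun _ => hg, fun y _ => by simp [Algebra.algebraMap_eq_smul_one]⟩

/-- The germ of a scalar function. -/
noncomputable def scalarGermG (n q : ℕ) (x : Fin n → ℝ) {U : Set (Fin n → ℝ)} (hU : IsOpen U)
    (hx : x ∈ U) (g : (Fin n → ℝ) → ℝ) (hg : ContDiffOn ℝ (⊤ : ℕ∞) g U) : SmoothGermAtG n q x :=
  ⟨(↑(fun y => algebraMap ℝ (GrassmannAlg q) (g y)) : Filter.Germ (𝓝 x) (GrassmannAlg q)),
    _, ⟨U, hU, hx, contDiffOnG_scalar hg⟩, rfl⟩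

/-- The coordinate germs. -/
def genG (n q : ℕ) (x : Fin n → ℝ) : Set (SmoothGermAtG n q x) :=
  Set.range (evenCoordGermG n q x) ∪ Set.range (oddCoordGermG n q x)

/-- Constants plus the right ideal generated by the coordinate germs. -/
noncomputable def tG (n q : ℕ) (x : Fin n → ℝ) : Submodule ℝ (SmoothGermAtG n q x) :=
  1 ⊔ Submodule.span ℝ (genG n q x) * ⊤

theorem tG_mul {n q : ℕ} {x : Fin n → ℝ} {a b : SmoothGermAtG n q x} (ha : a ∈ tG n q x)
    (hb : b ∈ tG n q x) : a * b ∈ tG n q x := by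
  have h : tG n q x * tG n q x ≤ tG n q x := by
    conv_lhs => enter [1]; unfold tG
    rw [Submodule.sup_mul, one_mul, mul_assoc]
    exact sup_le le_rfl ((mul_le_mul_right le_top _).trans le_sup_right)
  exact h (Submodule.mul_mem_mul ha hb)

theorem gen_mul_mem_tG {n q : ℕ} {x : Fin n → ℝ} {s : SmoothGermAtG n q x} (hs : s ∈ genG n q x)
    (a : SmoothGermAtG n q x) : s * a ∈ tG n q x :=
  Submodule.mem_sup_right (Submodule.mul_mem_mul (Submodule.subset_span hs) trivial)

theorem algebraMap_mem_tG {n q : ℕ} {x : Fin n → ℝ} (r : ℝ) :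
    algebraMap ℝ (SmoothGermAtG n q x) r ∈ tG n q x :=
  Submodule.mem_sup_left (Submodule.mem_one.2 ⟨r, rfl⟩)

theorem const_mem_tG {n q : ℕ} {x : Fin n → ℝ} (b : GrassmannAlg q) :
    constGermG n q x b ∈ tG n q x := by
  induction b using ExteriorAlgebra.induction with
  | algebraMap r => rw [AlgHom.commutes]; exact algebraMap_mem_tG r
  | ι v =>
    rw [pi_eq_sum_univ' v, map_sum, map_sum]
    refine Submodule.sum_mem _ fun j _ => ?_
    rw [map_smul, map_smul]
    refine Submodule.smul_mem _ _ ?_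
    have := gen_mul_mem_tG (s := oddCoordGermG n q x j) (Or.inr ⟨j, rfl⟩) 1
    rw [mul_one] at this
    exact this
  | mul a b ha hb => rw [map_mul]; exact tG_mul ha hb
  | add a b ha hb => rw [map_add]; exact Submodule.add_mem _ ha hb

/-- Smooth germs, underlying germ of a finite sum. -/
theorem coe_sum_germ {n q : ℕ} {x : Fin n → ℝ} {ι : Type} (s : Finset ι)
    (F : ι → (Fin n → ℝ) → GrassmannAlg q) :
    ((↑(fun y => ∑ i ∈ s, F i y) : Filter.Germ (𝓝 x) (GrassmannAlg q)))
      = ∑ i ∈ s, (↑(F i) : Filter.Germ (𝓝 x) (GrassmannAlg q)) := by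
  have := map_sum (Filter.Germ.coeAddHom (𝓝 x) : ((Fin n → ℝ) → GrassmannAlg q) →+ _) F s
  rw [← show (∑ i ∈ s, F i) = fun y => ∑ i ∈ s, F i y from funext fun y => Finset.sum_apply _ _ _]
  exact this

theorem scalar_mem_tG {n q : ℕ} {x : Fin n → ℝ} {U : Set (Fin n → ℝ)} (hU : IsOpen U)
    (hx : x ∈ U) (g : (Fin n → ℝ) → ℝ) (hg : ContDiffOn ℝ (⊤ : ℕ∞) g U) :
    scalarGermG n q x hU hx g hg ∈ tG n q x := by
  obtain ⟨h, hh, he⟩ := hadamard_local hU x hx g hg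
  have key : scalarGermG n q x hU hx g hg = constGermG n q x (algebraMap ℝ _ (g x)) +
      ∑ i, evenCoordGermG n q x i *
        scalarGermG n q x isOpen_univ (Set.mem_univ x) (h i) (hh i).contDiffOn := by
    apply Subtype.ext
    rw [AddMemClass.coe_add, AddSubmonoidClass.coe_finsetSum]
    have : ∀ i, ((evenCoordGermG n q x i *
        scalarGermG n q x isOpen_univ (Set.mem_univ x) (h i) (hh i).contDiffOn :
          SmoothGermAtG n q x) : Filter.Germ (𝓝 x) (GrassmannAlg q))
        = ↑(fun y : Fin n → ℝ => algebraMap ℝ (GrassmannAlg q) (y i - x i) *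
          algebraMap ℝ (GrassmannAlg q) (h i y)) := fun i => rfl
    rw [Finset.sum_congr rfl fun i _ => this i, ← coe_sum_germ]
    refine Filter.Germ.coe_eq.2 ?_
    filter_upwards [he] with y hy
    show algebraMap ℝ (GrassmannAlg q) (g y) = algebraMap ℝ (GrassmannAlg q) (g x) + _
    rw [hy, map_add, map_sum]
    simp only [map_mul]
  rw [key]
  exact Submodule.add_mem _ (const_mem_tG _)
    (Submodule.sum_mem _ fun i _ => gen_mul_mem_tG (Or.inl ⟨i, rfl⟩) _)

theorem tG_eq_top {n q : ℕ} {x : Fin n → ℝ} (a : SmoothGermAtG n q x) : a ∈ tG n q x := by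
  obtain ⟨_, f, ⟨U, hU, hx, k, g, b, hg, hf⟩, rfl⟩ := a
  have key : (⟨(↑f : Filter.Germ (𝓝 x) (GrassmannAlg q)), f,
      ⟨U, hU, hx, k, g, b, hg, hf⟩, rfl⟩ : SmoothGermAtG n q x)
      = ∑ j, scalarGermG n q x hU hx (g j) (hg j) * constGermG n q x (b j) := by
    apply Subtype.ext
    rw [AddSubmonoidClass.coe_finsetSum]
    have : ∀ j, ((scalarGermG n q x hU hx (g j) (hg j) * constGermG n q x (b j) :
          SmoothGermAtG n q x) : Filter.Germ (𝓝 x) (GrassmannAlg q))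
        = ↑(fun y : Fin n → ℝ => algebraMap ℝ (GrassmannAlg q) (g j y) * b j) := fun j => rfl
    rw [Finset.sum_congr rfl fun j _ => this j, ← coe_sum_germ]
    refine Filter.Germ.coe_eq.2 ?_
    filter_upwards [hU.mem_nhds hx] with y hy
    rw [hf y hy]
    exact Finset.sum_congr rfl fun j _ => by rw [Algebra.smul_def]
  rw [key]
  exact Submodule.sum_mem _ fun j _ => tG_mul (scalar_mem_tG _ _ _ _) (const_mem_tG _)

theorem gen_mem_mG {n q : ℕ} {x : Fin n → ℝ} {s : SmoothGermAtG n q x} (hs : s ∈ genG n q x) :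
    s ∈ mGSub n q x := by
  rcases hs with ⟨i, rfl⟩ | ⟨j, rfl⟩
  · show ExteriorAlgebra.algebraMapInv (algebraMap ℝ (GrassmannAlg q) (x i - x i)) = 0
    simp
  · show ExteriorAlgebra.algebraMapInv
      (ExteriorAlgebra.ι ℝ (Pi.single j (1 : ℝ) : Fin q → ℝ)) = 0
    simp [ExteriorAlgebra.algebraMapInv]

theorem mG_mul_right {n q : ℕ} {x : Fin n → ℝ} {s : SmoothGermAtG n q x}
    (hs : s ∈ mGSub n q x) (a : SmoothGermAtG n q x) : s * a ∈ mGSub n q x := by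
  obtain ⟨_, f, hf, rfl⟩ := s
  obtain ⟨_, g, hg, rfl⟩ := a
  have hs' : ExteriorAlgebra.algebraMapInv (f x) = 0 := hs
  show ExteriorAlgebra.algebraMapInv (f x * g x) = 0
  rw [map_mul, hs', zero_mul]

/-- Polynomials of degree at most `k` in the coordinate germs. -/
noncomputable def polyG (n q : ℕ) (x : Fin n → ℝ) (k : ℕ) : Submodule ℝ (SmoothGermAtG n q x) :=
  Submodule.span ℝ {z : SmoothGermAtG n q x |
        ∃ l : List (SmoothGermAtG n q x), l.length ≤ k ∧
          (∀ s ∈ l,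
            s ∈ Set.range (evenCoordGermG n q x) ∪ Set.range (oddCoordGermG n q x)) ∧
          z = l.prod}

theorem one_le_polyG {n q : ℕ} {x : Fin n → ℝ} (k : ℕ) : 1 ≤ polyG n q x k := by
  rw [Submodule.one_le]
  exact Submodule.subset_span ⟨[], by simp, by simp, by simp⟩

theorem gen_mul_polyG {n q : ℕ} {x : Fin n → ℝ} (k : ℕ) :
    Submodule.span ℝ (genG n q x) * polyG n q x k ≤ polyG n q x (k + 1) := by
  unfold polyG
  rw [Submodule.span_mul_span]
  refine Submodule.span_mono ?_
  rintro _ ⟨s, hs, _, ⟨l, hl, hls, rfl⟩, rfl⟩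
  refine ⟨s :: l, by simpa using hl, ?_, by simp⟩
  intro t ht
  rcases List.mem_cons.1 ht with rfl | ht
  · exact hs
  · exact hls t ht

theorem top_le_polyG_sup {n q : ℕ} {x : Fin n → ℝ} (k : ℕ) :
    (⊤ : Submodule ℝ (SmoothGermAtG n q x)) ≤ polyG n q x k ⊔ mGSub n q x ^ (k + 1) := by
  have hT : (⊤ : Submodule ℝ (SmoothGermAtG n q x)) ≤
      1 ⊔ Submodule.span ℝ (genG n q x) * ⊤ := fun a _ => tG_eq_top a
  have hgen : Submodule.span ℝ (genG n q x) ≤ mGSub n q x :=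
    Submodule.span_le.2 fun s hs => gen_mem_mG hs
  induction k with
  | zero =>
    refine hT.trans (sup_le_sup (one_le_polyG 0) ?_)
    rw [zero_add, pow_one, Submodule.mul_le]
    exact fun s hs a _ => mG_mul_right (hgen hs) a
  | succ k ih =>
    refine hT.trans (sup_le ((one_le_polyG _).trans le_sup_left) ?_)
    calc Submodule.span ℝ (genG n q x) * ⊤
        ≤ Submodule.span ℝ (genG n q x) * (polyG n q x k ⊔ mGSub n q x ^ (k + 1)) :=
          mul_le_mul_right ih _
      _ = Submodule.span ℝ (genG n q x) * polyG n q x k ⊔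
          Submodule.span ℝ (genG n q x) * mGSub n q x ^ (k + 1) := Submodule.mul_sup _ _ _
      _ ≤ _ := by
        refine sup_le_sup (gen_mul_polyG k) ?_
        rw [pow_succ' _ (k + 1)]
        exact mul_le_mul_left hgen _

/-- **(Lemma 3.14 (ii), specialized to `ℝ`.)** Let `U ⊆ ℝ^n` be open, `x ∈ U`, `f : U → λ_q`
a `C^∞` map and `k ∈ ℕ`. Then there is an element `p` of `A_x` which is an `ℝ`-linear
combination of products of at most `k` elements taken from the germs of the scalar
coordinate functions `y ↦ (y i - x i) · 1` and the constant germs with value `ι (e j)`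
(the empty product being `1`), such that the germ of `f` at `x` minus `p` lies in
`m_x ^ (k + 1)`, the `(k+1)`-st power of the two-sided ideal
`m_x = {h ∈ A_x ∣ ε (h x) = 0}`. -/
theorem exists_poly_germ_sub_mem_mG_pow (n q : ℕ) (U : Set (Fin n → ℝ)) (hU : IsOpen U)
    (x : Fin n → ℝ) (hx : x ∈ U) (f : (Fin n → ℝ) → GrassmannAlg q)
    (hf : ContDiffOnG f U) (k : ℕ) :
    ∃ p ∈ Submodule.span ℝ {z : SmoothGermAtG n q x |
        ∃ l : List (SmoothGermAtG n q x), l.length ≤ k ∧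
          (∀ s ∈ l,
            s ∈ Set.range (evenCoordGermG n q x) ∪ Set.range (oddCoordGermG n q x)) ∧
          z = l.prod},
      (⟨(↑f : Filter.Germ (𝓝 x) (GrassmannAlg q)), f, ⟨U, hU, hx, hf⟩, rfl⟩ :
          SmoothGermAtG n q x) - p ∈
        (mGSub n q x ^ (k + 1) : Submodule ℝ (SmoothGermAtG n q x)) := by
  obtain ⟨p, hp, r, hr, hpr⟩ := Submodule.mem_sup.1 (top_le_polyG_sup k
    (Submodule.mem_top (x := (⟨(↑f : Filter.Germ (𝓝 x) (GrassmannAlg q)), f,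
      ⟨U, hU, hx, hf⟩, rfl⟩ : SmoothGermAtG n q x))))
  refine ⟨p, hp, ?_⟩
  rw [← hpr, add_sub_cancel_left]
  exact hr
end
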